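/- arXiv:math/0308086 — 8 statements merged into one kernel-verified Lean document; each statement's English description precedes it below -/
import Mathlib

section
/- The derivative of the Riemann zeta function at -1 satisfies ζ'(-1) = 2 ∫₀^∞ x·log x / (e^{2πx} − 1) dx. -/
open Real MeasureTheory Filter

/-- Hurwitz zeta function ζ(s, a) for real a > 0, via analytic continuation. -/
noncomputable def hurwitzZetaReal (s : ℂ) (a : ℝ) : ℂ :=
  HurwitzZeta.hurwitzZeta (a : UnitAddCircle) s -
    ∑ k ∈ Finset.range (⌈a⌉₊ - 1), ((a - (⌈a⌉₊ - 1) + k : ℝ) : ℂ) ^ (-s)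

/-- ζ'(-1, a): derivative of the Hurwitz zeta function w.r.t. s at s = -1. -/
noncomputable def hurwitzZetaDerivNegOne (a : ℝ) : ℂ :=
  deriv (fun s => hurwitzZetaReal s a) (-1)

/-- Logarithm of the Glaisher–Kinkelin constant: log A = 1/12 - ζ'(-1). -/
noncomputable def logA : ℂ := 1 / 12 - deriv riemannZeta (-1)

/-- log G(z+1) for z > 0, via log G(z+1) = z log Γ(z) + ζ'(-1) - ζ'(-1, z). -/
noncomputable def logBarnesG1p (z : ℝ) : ℂ :=
  z * Real.log (Real.Gamma z) + deriv riemannZeta (-1) - hurwitzZetaDerivNegOne z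

/-- log G(x) for x > 0, via the recurrence G(z+1) = Γ(z) G(z) on (0, 1]. -/
noncomputable def logBarnesG (x : ℝ) : ℂ :=
  if x ≤ 1 then logBarnesG1p x - Real.log (Real.Gamma x) else logBarnesG1p (x - 1)

/-- The Barnes G-function (for positive real argument). -/
noncomputable def barnesG (x : ℝ) : ℂ := Complex.exp (logBarnesG x)

/-- The digamma function ψ = (log Γ)'. -/
noncomputable def digamma (x : ℝ) : ℝ := deriv (fun t => Real.log (Real.Gamma t)) x

/-- The trigamma function ψ⁽¹⁾ = (log Γ)''. -/
noncomputable def trigamma (x : ℝ) : ℝ :=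
  deriv (deriv (fun t => Real.log (Real.Gamma t))) x

/-- The Clausen function Cl₂(x) = ∑_{k ≥ 1} sin(k x) / k². -/
noncomputable def clausen2 (x : ℝ) : ℝ := ∑' k : ℕ, Real.sin ((k + 1) * x) / (k + 1) ^ 2

/-- Catalan's constant. -/
noncomputable def catalanConst : ℝ := ∑' k : ℕ, (-1 : ℝ) ^ k / (2 * (k : ℝ) + 1) ^ 2

lemma keysum {s : ℂ} (hs : 1 < s.re) :
    mellin (fun x : ℝ => ((1 / (Real.exp (2 * π * x) - 1) : ℝ) : ℂ)) s
      = (2 * π : ℂ) ^ (-s) * Complex.Gamma s * riemannZeta s := by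
  have h := hasSum_mellin (ι := ℕ) (a := fun _ => 1) (p := fun n => 2 * π * (n + 1))
    (F := fun x : ℝ => ((1 / (Real.exp (2 * π * x) - 1) : ℝ) : ℂ)) (s := s)
    (fun i => Or.inr (by positivity)) (by linarith) ?_ ?_
  · rw [← h.tsum_eq, zeta_eq_tsum_one_div_nat_add_one_cpow hs, ← tsum_mul_left]
    congr 1; ext n
    have : ((2 * π * (n + 1) : ℝ) : ℂ) ^ s = (2 * π : ℂ) ^ s * (n + 1 : ℂ) ^ s := by
      rw [Complex.ofReal_mul, Complex.mul_cpow_ofReal_nonneg (by positivity) (by positivity)]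
      push_cast; rfl
    rw [this, Complex.cpow_neg]
    have h1 : (2 * π : ℂ) ^ s ≠ 0 := by
      rw [Complex.cpow_ne_zero_iff]; left; norm_num
    have h2 : (n + 1 : ℂ) ^ s ≠ 0 := by
      rw [Complex.cpow_ne_zero_iff]; left; exact_mod_cast Nat.succ_ne_zero n
    field_simp
  · intro t ht
    rw [Set.mem_Ioi] at ht
    have hr : Real.exp (-(2 * π * t)) < 1 := by
      rw [Real.exp_lt_one_iff]; have := Real.pi_pos; have : 0 < 2 * π * t := by positivity
      linarith
    have g := (hasSum_geometric_of_lt_one (Real.exp_pos _).le hr).mul_left (Real.exp (-(2 * π * t)))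
    have e1 : Real.exp (-(2 * π * t)) * (1 - Real.exp (-(2 * π * t)))⁻¹ =
        1 / (Real.exp (2 * π * t) - 1) := by
      rw [Real.exp_neg] at hr ⊢
      have hp := Real.exp_pos (2 * π * t)
      have : Real.exp (2 * π * t) - 1 ≠ 0 := by
        have := (inv_lt_one₀ hp).1 hr
        linarith
      have : 1 - (Real.exp (2 * π * t))⁻¹ ≠ 0 := by linarith
      field_simp
    rw [e1] at g
    have g' := Complex.hasSum_ofReal.2 g
    convert g' using 2 with n
    rw [one_mul, ← Real.exp_nat_mul, ← Real.exp_add]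
    congr 2; ring
  · have := (Real.summable_one_div_nat_add_rpow 1 s.re).2 hs
    have := this.mul_left ((2 * π) ^ (-s.re))
    refine this.congr fun n => ?_
    have hn : (0:ℝ) < n + 1 := by positivity
    rw [abs_of_pos hn, Real.mul_rpow (by positivity) hn.le, Real.rpow_neg (by positivity), norm_one]
    field_simp

lemma keyderiv : HasDerivAt (mellin (fun x : ℝ => ((1 / (Real.exp (2 * π * x) - 1) : ℝ) : ℂ)))
    (mellin (fun x : ℝ => Real.log x • ((1 / (Real.exp (2 * π * x) - 1) : ℝ) : ℂ)) 2) 2 := by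
  have hle : ∀ x : ℝ, 0 < x → 2 * π * x ≤ Real.exp (2 * π * x) - 1 := fun x hx => by
    linarith [Real.add_one_le_exp (2 * π * x)]
  refine (mellin_hasDerivAt_of_isBigO_rpow (a := 3) (b := 1) ?_ ?_ (by norm_num) ?_ (by norm_num)).2
  · refine ContinuousOn.locallyIntegrableOn ?_ measurableSet_Ioi
    refine Complex.continuous_ofReal.comp_continuousOn ?_
    refine ContinuousOn.div (by fun_prop) (by fun_prop) fun x hx => ?_
    have hx' : 0 < x := hx
    have : 0 < 2 * π * x := by positivity
    linarith [hle x hx']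
  · refine Asymptotics.IsBigO.of_bound 6 ?_
    filter_upwards [eventually_gt_atTop (1:ℝ)] with x hx
    have h0 : 0 < x := by linarith
    have h3 : x ^ 3 / 6 ≤ Real.exp (2 * π * x) - 1 := by
      have h1 := Real.sum_le_exp_of_nonneg h0.le 4
      simp [Finset.sum_range_succ, Nat.factorial] at h1
      have h2 : Real.exp x ≤ Real.exp (2 * π * x) := by
        apply Real.exp_le_exp.2; nlinarith [Real.pi_gt_three]
      have : 0 ≤ x ^ 2 := by positivity
      linarith
    have hp : 0 < x ^ 3 / 6 := by positivity
    rw [Complex.norm_real, Real.norm_eq_abs, abs_of_nonneg (by apply one_div_nonneg.2; linarith),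
      Real.norm_eq_abs, abs_of_nonneg (by positivity), Real.rpow_neg h0.le]
    norm_cast
    calc 1 / (Real.exp (2 * π * x) - 1) ≤ 1 / (x ^ 3 / 6) := one_div_le_one_div_of_le hp h3
      _ = _ := by field_simp
  · refine Asymptotics.IsBigO.of_bound 1 ?_
    filter_upwards [self_mem_nhdsWithin] with x hx
    have h0 : 0 < x := hx
    have h3 : x ≤ Real.exp (2 * π * x) - 1 := by
      nlinarith [hle x h0, Real.pi_gt_three]
    rw [Complex.norm_real, Real.norm_eq_abs, abs_of_nonneg (by apply one_div_nonneg.2; linarith),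
      Real.norm_eq_abs, abs_of_nonneg (by positivity), Real.rpow_neg h0.le, Real.rpow_one, one_mul,
      ← one_div]
    exact one_div_le_one_div_of_le h0 h3

/-- ζ'(-1) = 2 ∫₀^∞ x log x / (e^{2πx} - 1) dx. -/
theorem zeta_deriv_neg_one_eq_integral :
    deriv riemannZeta (-1) =
      2 * ((∫ x in Set.Ioi (0 : ℝ), x * Real.log x / (Real.exp (2 * π * x) - 1)) : ℂ) := by
  set F := (fun x : ℝ => ((1 / (Real.exp (2 * π * x) - 1) : ℝ) : ℂ)) with hF
  have e : (fun s : ℂ => riemannZeta (1 - s)) =ᶠ[nhds 2]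
      fun s => 2 * (Complex.cos (π * s / 2) * mellin F s) := by
    have ho : IsOpen {s : ℂ | 1 < s.re} := isOpen_lt continuous_const Complex.continuous_re
    filter_upwards [ho.mem_nhds (show (2:ℂ) ∈ {s : ℂ | 1 < s.re} by simp)] with s hs
    have hs : 1 < s.re := hs
    rw [keysum hs, riemannZeta_one_sub]
    · ring
    · rintro n rfl
      simp at hs
      have : (0:ℝ) ≤ n := by positivity
      linarith
    · rintro rfl; simp at hs
  have hc : HasDerivAt (fun s : ℂ => Complex.cos (π * s / 2)) 0 2 := by
    have h1 : HasDerivAt (fun s : ℂ => π * s / 2) (π * 1 / 2) (2:ℂ) :=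
      ((hasDerivAt_id (2:ℂ)).const_mul (π : ℂ)).div_const 2
    convert h1.ccos using 1
    rw [mul_div_cancel_right₀ _ two_ne_zero]; simp
  have h1 := ((hc.mul keyderiv).const_mul 2).congr_of_eventuallyEq e
  have hz : HasDerivAt riemannZeta (deriv riemannZeta (-1)) (1 - 2) := by
    have := (differentiableAt_riemannZeta (s := -1) (by norm_num)).hasDerivAt
    rwa [show (1 - 2 : ℂ) = -1 by norm_num]
  have h2 := hz.comp (2:ℂ) ((hasDerivAt_id (2:ℂ)).const_sub 1)
  have h3 := h2.unique h1
  rw [mul_div_cancel_right₀ _ two_ne_zero, Complex.cos_pi] at h3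
  have h4 : deriv riemannZeta (-1) = 2 * mellin (fun x : ℝ => Real.log x • F x) 2 := by
    linear_combination -h3
  rw [h4, mellin]
  congr 1
  refine setIntegral_congr_fun measurableSet_Ioi fun x hx => ?_
  have : (x:ℂ) ^ ((2:ℂ) - 1) = x := by norm_num
  simp only [this, hF, smul_eq_mul, Complex.real_smul]
  push_cast
  ring
end

section
/- The Glaisher–Kinkelin constant satisfies log A = (1 + log(2π))/12 − (1/(2π²)) ∫₀^∞ x·log x / (eˣ − 1) dx. -/
open Real MeasureTheory Filter

noncomputable def boseF (t : ℝ) : ℂ := (((Real.exp t - 1)⁻¹ : ℝ) : ℂ)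

lemma boseF_mellin {s : ℂ} (hs : 1 < s.re) :
    mellin boseF s = Complex.Gamma s * riemannZeta s := by
  have h := hasSum_mellin (ι := ℕ) (a := fun _ => 1) (p := fun n => (n : ℝ) + 1) (F := boseF) (s := s)
    (fun i => Or.inr (by positivity)) (by linarith) ?_ ?_
  · rw [← h.tsum_eq, zeta_eq_tsum_one_div_nat_add_one_cpow hs, ← tsum_mul_left]
    congr 1
    ext n
    push_cast
    ring
  · intro t ht
    have ht : 0 < t := ht
    have hr : Real.exp (-t) < 1 := by rw [Real.exp_lt_one_iff]; linarith
    have hg := (hasSum_geometric_of_lt_one (Real.exp_pos (-t)).le hr).mul_left (Real.exp (-t))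
    have hv : Real.exp (-t) * (1 - Real.exp (-t))⁻¹ = (Real.exp t - 1)⁻¹ := by
      have h1 : Real.exp t - 1 ≠ 0 := by
        have := Real.add_one_lt_exp ht.ne'
        linarith
      have h2 : 1 - Real.exp (-t) ≠ 0 := by linarith
      have h3 : Real.exp (-t) * Real.exp t = 1 := by rw [← Real.exp_add]; simp
      field_simp
      linarith
    rw [hv] at hg
    have := Complex.hasSum_ofReal.mpr hg
    unfold boseF
    convert this using 2 with n
    rw [one_mul, ← Real.exp_nat_mul, ← Real.exp_add]
    congr 2
    ring
  · have := (summable_nat_add_iff 1).mpr (Real.summable_one_div_nat_rpow.mpr hs)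
    simpa using this

lemma boseF_deriv : HasDerivAt (mellin boseF) (mellin (fun t => Real.log t • boseF t) 2) 2 := by
  have hb : ∀ t : ℝ, 0 < t → 0 < Real.exp t - 1 := fun t ht => by
    have := Real.add_one_lt_exp ht.ne'
    linarith
  refine (mellin_hasDerivAt_of_isBigO_rpow (a := 3) (b := 1) ?_ ?_ (by norm_num) ?_ (by norm_num)).2
  · refine ContinuousOn.locallyIntegrableOn ?_ measurableSet_Ioi
    unfold boseF
    refine Complex.continuous_ofReal.comp_continuousOn ?_
    exact ContinuousOn.inv₀ (by fun_prop) (fun t ht => (hb t ht).ne')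
  · refine Asymptotics.IsBigO.of_bound 6 ?_
    filter_upwards [eventually_gt_atTop 0] with t ht
    have h := Real.sum_le_exp_of_nonneg ht.le 4
    simp [Finset.sum_range_succ, Nat.factorial] at h
    rw [boseF, Complex.norm_real, Real.norm_of_nonneg (inv_nonneg.mpr (hb t ht).le),
      Real.norm_of_nonneg (by positivity), Real.rpow_neg ht.le]
    norm_cast
    have : (6:ℝ) * (t^3)⁻¹ = (t^3/6)⁻¹ := by field_simp
    rw [this]
    apply inv_anti₀ (by positivity)
    nlinarith
  · refine Asymptotics.IsBigO.of_bound 1 ?_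
    filter_upwards [self_mem_nhdsWithin] with t ht
    have ht : 0 < t := ht
    rw [boseF, Complex.norm_real, Real.norm_of_nonneg (inv_nonneg.mpr (hb t ht).le),
      Real.norm_of_nonneg (by positivity), Real.rpow_neg_one, one_mul]
    apply inv_anti₀ ht
    have := Real.add_one_lt_exp ht.ne'
    linarith

lemma boseF_log_mellin : mellin (fun t => Real.log t • boseF t) 2 =
    ((∫ x in Set.Ioi (0 : ℝ), x * Real.log x / (Real.exp x - 1) : ℝ) : ℂ) := by
  rw [mellin, ← integral_complex_ofReal]
  refine setIntegral_congr_fun measurableSet_Ioi (fun t ht => ?_)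
  have : (2 : ℂ) - 1 = 1 := by norm_num
  simp only [this, boseF, Complex.cpow_one, smul_eq_mul, Complex.real_smul]
  push_cast
  ring

/-- log A = (1 + log(2π))/12 − (1/(2π²)) ∫₀^∞ x log x / (eˣ − 1) dx. -/
theorem logA_eq_integral :
    logA = (((1 + Real.log (2 * π)) / 12
      - 1 / (2 * π ^ 2) * (∫ x in Set.Ioi (0 : ℝ), x * Real.log x / (Real.exp x - 1)) : ℝ) : ℂ) := by
  have hpi : (π : ℂ) ≠ 0 := by exact_mod_cast Real.pi_ne_zero
  have hM2 : mellin boseF 2 = (π : ℂ) ^ 2 / 6 := by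
    rw [boseF_mellin (by norm_num), riemannZeta_two, Complex.Gamma_ofNat_eq_factorial]
    simp
  have hL : HasDerivAt (fun s : ℂ => riemannZeta (1 - s)) (-deriv riemannZeta (-1)) 2 := by
    have h1 : HasDerivAt riemannZeta (deriv riemannZeta (-1)) (1 - 2) := by
      have : (1 : ℂ) - 2 = -1 := by norm_num
      rw [this]
      exact (differentiableAt_riemannZeta (by norm_num)).hasDerivAt
    have h2 := h1.comp (2 : ℂ) ((hasDerivAt_id (2 : ℂ)).const_sub 1)
    rw [mul_neg_one] at h2
    exact h2
  have hP : HasDerivAt (fun s : ℂ => (2 * π : ℂ) ^ (-s))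
      ((2 * π : ℂ) ^ (-2 : ℂ) * Complex.log (2 * π) * (-1)) 2 := by
    exact (hasDerivAt_id (2 : ℂ)).neg.const_cpow (Or.inl (by simpa using hpi))
  have hC : HasDerivAt (fun s : ℂ => Complex.cos (π * s / 2))
      (-Complex.sin (π * 2 / 2) * (π * 1 / 2)) 2 :=
    (((hasDerivAt_id (2 : ℂ)).const_mul (π : ℂ)).div_const 2).ccos
  have hR := ((hP.const_mul 2).mul hC).mul boseF_deriv
  have heq : (fun s : ℂ => riemannZeta (1 - s)) =ᶠ[nhds 2]
      (fun s : ℂ => 2 * (2 * π : ℂ) ^ (-s) * Complex.cos (π * s / 2) * mellin boseF s) := by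
    have : {s : ℂ | 1 < s.re} ∈ nhds (2 : ℂ) :=
      (isOpen_lt continuous_const Complex.continuous_re).mem_nhds (by norm_num)
    filter_upwards [this] with s hs
    have hs : 1 < s.re := hs
    rw [boseF_mellin hs, riemannZeta_one_sub]
    · ring
    · rintro n rfl
      simp at hs
      have : (0:ℝ) ≤ n := n.cast_nonneg
      linarith
    · rintro rfl
      simp at hs
  have key := hL.unique (HasDerivAt.congr_of_eventuallyEq hR heq)
  rw [boseF_log_mellin] at key
  have hlog : Complex.log (2 * π) = ((Real.log (2 * π) : ℝ) : ℂ) := by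
    rw [Complex.ofReal_log (by positivity)]
    push_cast
    rfl
  have hc2 : (π : ℂ) * 2 / 2 = π := by ring
  have hpow : (2 * π : ℂ) ^ (-2 : ℂ) = ((2 * π : ℂ) ^ 2)⁻¹ := by
    rw [Complex.cpow_neg]
    norm_cast
  simp only [Pi.mul_apply, hc2, hpow, hlog, hM2, Complex.cos_pi, Complex.sin_pi] at key
  rw [logA, sub_eq_add_neg, key]
  generalize (∫ x in Set.Ioi (0 : ℝ), x * Real.log x / (Real.exp x - 1)) = I
  generalize Real.log (2 * π) = L
  push_cast
  field_simp
  ring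
end

section
/- For every real z > 0, the derivative of the Hurwitz zeta function at s = −1 admits the Hermite-type integral representation ζ'(−1, z) = (z²/2)·log z − z²/4 − (z/2)·log z + 2z ∫₀^∞ arctan(x/z)/(e^{2πx} − 1) dx + ∫₀^∞ x·log(x² + z²)/(e^{2πx} − 1) dx. -/
open Real MeasureTheory Filter

lemma hz_int_rpow (σ b : ℝ) (hσ : -1 < σ) (hb : 0 < b) :
    IntegrableOn (fun t : ℝ => t ^ σ * Real.exp (-(b * t))) (Set.Ioi 0) := by
  have := integrableOn_rpow_mul_exp_neg_mul_rpow hσ (one_pos : (0:ℝ) < 1) hb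
  simpa using this

lemma hz_meas_cpow (s : ℂ) (r : ℂ) :
    AEStronglyMeasurable (fun t : ℝ => (t : ℂ) ^ s * Complex.exp (-(r * t)))
      (volume.restrict (Set.Ioi 0)) := by
  apply ContinuousOn.aestronglyMeasurable _ measurableSet_Ioi
  apply ContinuousOn.mul
  · intro t ht
    exact (Complex.continuousAt_ofReal_cpow_const t s (Or.inr (ne_of_gt ht))).continuousWithinAt
  · fun_prop

lemma hz_norm_cpow_exp (s r : ℂ) (t : ℝ) (ht : 0 < t) :
    ‖(t : ℂ) ^ s * Complex.exp (-(r * t))‖ = t ^ s.re * Real.exp (-(r.re * t)) := by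
  rw [norm_mul, Complex.norm_cpow_eq_rpow_re_of_pos ht, Complex.norm_exp]
  simp

lemma hz_int_cpow (s r : ℂ) (hs : -1 < s.re) (hr : 0 < r.re) :
    IntegrableOn (fun t : ℝ => (t : ℂ) ^ s * Complex.exp (-(r * t))) (Set.Ioi 0) := by
  refine (hz_int_rpow s.re r.re hs hr).mono' (hz_meas_cpow s r) ?_
  refine (ae_restrict_iff' measurableSet_Ioi).2 (ae_of_all _ fun t ht => ?_)
  exact (hz_norm_cpow_exp s r t ht).le

lemma hz_laplace (s r : ℂ) (hs : 0 < s.re) (hr : 0 < r.re) :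
    ∫ t in Set.Ioi (0:ℝ), (t : ℂ) ^ (s - 1) * Complex.exp (-(r * t)) =
      Complex.exp (-(s * Complex.log r)) * Complex.Gamma s := by
  have hd : ∀ r : ℂ, 0 < r.re → DifferentiableAt ℂ (fun r : ℂ =>
      ∫ t in Set.Ioi (0:ℝ), (t : ℂ) ^ (s - 1) * Complex.exp (-(r * t))) r := by
    intro r hr
    have key := hasDerivAt_integral_of_dominated_loc_of_deriv_le
      (μ := volume.restrict (Set.Ioi (0:ℝ)))
      (F := fun (r : ℂ) (t : ℝ) => (t : ℂ) ^ (s - 1) * Complex.exp (-(r * t)))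
      (F' := fun (r : ℂ) (t : ℝ) => (t : ℂ) ^ (s - 1) * (Complex.exp (-(r * t)) * (-t)))
      (bound := fun t => t ^ s.re * Real.exp (-((r.re/2) * t)))
      (x₀ := r) (s := {w : ℂ | r.re/2 < w.re}) ?_ ?_ ?_ ?_ ?_ ?_ ?_
    · exact key.2.differentiableAt
    · exact (isOpen_lt continuous_const Complex.continuous_re).mem_nhds
        (by simp only [Set.mem_ofPred_eq]; linarith)
    · exact Eventually.of_forall fun w => hz_meas_cpow _ _
    · exact hz_int_cpow (s-1) r (by simp; linarith) hr
    · have := (hz_meas_cpow (s-1) r).mul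
        (g := fun t : ℝ => -(t:ℂ)) (by fun_prop)
      refine this.congr (ae_of_all _ fun t => ?_)
      simp [mul_assoc]
    · refine (ae_restrict_iff' measurableSet_Ioi).2 (ae_of_all _ fun t (ht : 0 < t) w hw => ?_)
      rw [← mul_assoc, norm_mul, hz_norm_cpow_exp _ _ t ht]
      simp only [Complex.sub_re, Complex.one_re, norm_neg, Complex.norm_real, Real.norm_eq_abs,
        abs_of_pos ht, Set.mem_ofPred_eq] at hw ⊢
      rw [Real.rpow_sub_one ht.ne']
      have : Real.exp (-(w.re * t)) ≤ Real.exp (-(r.re/2*t)) := by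
        apply Real.exp_le_exp.2; nlinarith
      calc t ^ s.re / t * Real.exp (-(w.re * t)) * t = t ^ s.re * Real.exp (-(w.re * t)) := by
            field_simp
        _ ≤ _ := by gcongr
    · exact hz_int_rpow _ _ (by linarith) (by linarith)
    · refine ae_of_all _ fun t w hw => ?_
      apply HasDerivAt.const_mul
      apply HasDerivAt.cexp
      simpa using ((hasDerivAt_id w).mul_const (t:ℂ)).fun_neg
  have hopen : IsOpen {w : ℂ | 0 < w.re} := isOpen_lt continuous_const Complex.continuous_re
  have hA := DifferentiableOn.analyticOnNhd (s := {w : ℂ | 0 < w.re})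
    (fun w hw => (hd w hw).differentiableWithinAt) hopen
  have hB : AnalyticOnNhd ℂ (fun r : ℂ => Complex.exp (-(s * Complex.log r)) * Complex.Gamma s)
      {w : ℂ | 0 < w.re} := by
    refine DifferentiableOn.analyticOnNhd (fun w hw => DifferentiableAt.differentiableWithinAt ?_)
      hopen
    have : w ∈ Complex.slitPlane := Or.inl hw
    fun_prop (disch := assumption)
  have hconv : IsPreconnected {w : ℂ | 0 < w.re} := (convex_halfSpace_re_gt 0).isPreconnected
  refine hA.eqOn_of_preconnected_of_frequently_eq hB hconv (z₀ := 1) (by simp) ?_ hr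
  have hreal : ∀ x : ℝ, 0 < x →
      (∫ t in Set.Ioi (0:ℝ), (t : ℂ) ^ (s - 1) * Complex.exp (-((x:ℂ) * t))) =
      Complex.exp (-(s * Complex.log x)) * Complex.Gamma s := by
    intro x hx
    rw [Complex.integral_cpow_mul_exp_neg_mul_Ioi hs hx, one_div, Complex.cpow_def_of_ne_zero
      (by simpa using hx.ne'), ← Complex.ofReal_inv, ← Complex.ofReal_log (by positivity),
      ← Complex.ofReal_log hx.le, Real.log_inv]
    congr 2; push_cast; ring
  have ht : Tendsto (fun n : ℕ => ((1 + 1 / ((n:ℝ) + 1) : ℝ) : ℂ)) atTop (nhdsWithin 1 {1}ᶜ) := by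
    rw [tendsto_nhdsWithin_iff]
    constructor
    · have := (tendsto_one_div_add_atTop_nhds_zero_nat (𝕜 := ℝ)).const_add 1
      have h2 := (Complex.continuous_ofReal.tendsto _).comp this
      simpa [Function.comp_def] using h2
    · refine Eventually.of_forall fun n => ?_
      have : (0:ℝ) < 1 / ((n:ℝ)+1) := by positivity
      simp only [Set.mem_compl_iff, Set.mem_singleton_iff]
      intro h
      have : (1 + 1 / ((n:ℝ) + 1)) = 1 := by exact_mod_cast h
      linarith
  exact ht.frequently (Frequently.of_forall fun n => hreal _ (by positivity))


lemma hz_sin_exp (a t : ℝ) (ha : 0 < a) :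
    IntegrableOn (fun x : ℝ => Real.sin (x * t) * Real.exp (-(a * x))) (Set.Ioi 0) ∧
    ∫ x in Set.Ioi (0:ℝ), Real.sin (x * t) * Real.exp (-(a * x)) = t / (t ^ 2 + a ^ 2) := by
  have hre : ((-a : ℂ) + t * Complex.I).re < 0 := by simp [ha]
  have h1 := integrableOn_exp_mul_complex_Ioi hre 0
  have h2 := integral_exp_mul_complex_Ioi hre 0
  have hE : ∀ x : ℝ, RCLike.im (Complex.exp (((-a : ℂ) + t * Complex.I) * x)) =
      Real.sin (x * t) * Real.exp (-(a * x)) := by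
    intro x
    simp [Complex.exp_im]
    ring_nf
  constructor
  · refine (h1.im).congr (ae_of_all _ fun x => hE x)
  · have h3 := integral_im h1
    simp only [hE] at h3
    rw [h3, h2]
    have hne : t ^ 2 + a ^ 2 ≠ 0 := by positivity
    simp [Complex.div_im, Complex.normSq_apply]
    rw [show a * a + t * t = t^2+a^2 by ring, neg_div, neg_neg]

lemma hz_x_exp (a : ℝ) (ha : 0 < a) :
    IntegrableOn (fun x : ℝ => x * Real.exp (-(a * x))) (Set.Ioi 0) ∧
    ∫ x in Set.Ioi (0:ℝ), x * Real.exp (-(a * x)) = 1 / a ^ 2 := by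
  constructor
  · simpa using integrableOn_rpow_mul_exp_neg_mul_rpow (s := 1) (by norm_num)
      (one_pos : (0:ℝ) < 1) ha
  · have := Real.integral_rpow_mul_exp_neg_mul_Ioi (a := 2) (by norm_num) ha
    norm_num at this
    simpa using this

lemma hz_geom (x : ℝ) (hx : 0 < x) :
    HasSum (fun n : ℕ => Real.exp (-((2 * π * (n + 1)) * x))) (1 / (Real.exp (2 * π * x) - 1)) := by
  have hlt : Real.exp (-(2*π*x)) < 1 := by
    rw [Real.exp_lt_one_iff]; have := pi_pos; simp; positivity
  have h := (hasSum_geometric_of_lt_one (Real.exp_pos _).le hlt).mul_left (Real.exp (-(2*π*x)))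
  convert! h using 1
  · funext n
    rw [← Real.exp_nat_mul, ← Real.exp_add]; ring_nf
  · have h1 : Real.exp (-(2*π*x)) = (Real.exp (2*π*x))⁻¹ := Real.exp_neg _
    have h2 : 1 < Real.exp (2*π*x) := by
      rw [Real.one_lt_exp_iff]; have := pi_pos; positivity
    rw [h1]
    have : Real.exp (2*π*x) - 1 ≠ 0 := by linarith
    field_simp

lemma hz_sin_int (t : ℝ) (ht : 0 < t) :
    HasSum (fun n : ℕ => t / (t ^ 2 + (2 * π * (n + 1)) ^ 2))
    (∫ x in Set.Ioi (0:ℝ), Real.sin (x * t) * (1 / (Real.exp (2 * π * x) - 1))) := by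
  have hpi := pi_pos
  have hpos : ∀ n : ℕ, 0 < 2 * π * ((n:ℝ) + 1) := fun n => by positivity
  have h := hasSum_integral_of_summable_integral_norm (μ := volume.restrict (Set.Ioi (0:ℝ)))
    (F := fun (n : ℕ) (x : ℝ) => Real.sin (x * t) * Real.exp (-((2 * π * (n + 1)) * x)))
    (fun n => (hz_sin_exp _ t (hpos n)).1) ?_
  · convert! h using 1
    · funext n
      exact ((hz_sin_exp _ t (hpos n)).2).symm
    · refine setIntegral_congr_fun measurableSet_Ioi fun x hx => ?_
      exact (((hz_geom x hx).mul_left _).tsum_eq).symm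
  · have hs : Summable (fun n : ℕ => t * (1 / (2 * π * ((n:ℝ) + 1)) ^ 2)) := by
      have := (summable_nat_add_iff 1).2 (Real.summable_one_div_nat_pow.2 (one_lt_two : 1 < 2))
      refine ((this.mul_left (t / (2*π)^2))).congr fun n => ?_
      push_cast
      field_simp
    refine hs.of_nonneg_of_le (fun n => integral_nonneg fun x => norm_nonneg _) fun n => ?_
    rw [← (hz_x_exp _ (hpos n)).2, ← integral_const_mul]
    refine setIntegral_mono_on (hz_sin_exp _ t (hpos n)).1.norm
      ((hz_x_exp _ (hpos n)).1.const_mul t) measurableSet_Ioi fun x (hx : 0 < x) => ?_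
    rw [norm_mul, Real.norm_eq_abs, Real.norm_eq_abs, Real.abs_exp, ← mul_assoc]
    gcongr
    calc |Real.sin (x * t)| ≤ |x * t| := Real.abs_sin_le_abs
      _ = t * x := by rw [abs_of_pos (by positivity), mul_comm]

lemma hz_kernel (t : ℝ) (ht : 0 < t) :
    1 / (1 - Real.exp (-t)) = 1 / t + 1 / 2 +
      2 * ∫ x in Set.Ioi (0:ℝ), Real.sin (x * t) * (1 / (Real.exp (2 * π * x) - 1)) := by
  have hpi := pi_pos
  have hpc : (π : ℂ) ≠ 0 := by exact_mod_cast hpi.ne'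
  have htc : (t : ℂ) ≠ 0 := by exact_mod_cast ht.ne'
  rw [← (hz_sin_int t ht).tsum_eq]
  set x : ℂ := Complex.I * t / (2 * π) with hx
  have hxim : 0 < x.im := by
    have : x = ((t / (2*π) : ℝ) : ℂ) * Complex.I := by rw [hx]; push_cast; ring
    rw [this, Complex.im_ofReal_mul, Complex.I_im, mul_one]; positivity
  have hmem : x ∈ Complex.integerComplement := UpperHalfPlane.coe_mem_integerComplement ⟨x, hxim⟩
  have h := cot_series_rep' hmem
  rw [Complex.cot_pi_eq_exp_ratio] at h
  have hE : Complex.exp (2 * π * Complex.I * x) = ((Real.exp (-t) : ℝ) : ℂ) := by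
    rw [Complex.ofReal_exp]; congr 1; rw [hx]; field_simp; push_cast; simp
  rw [hE] at h
  have hterm : ∀ n : ℕ, 1 / (x - ((n:ℂ) + 1)) + 1 / (x + (n + 1)) =
      (-4 * π * Complex.I) * ((t / (t ^ 2 + (2 * π * (n + 1)) ^ 2) : ℝ) : ℂ) := by
    intro n
    have e1 : x - ((n:ℂ)+1) ≠ 0 := by
      have := Complex.integerComplement_add_ne_zero hmem (-(n+1))
      push_cast at this; convert this using 1; ring
    have e2 : x + ((n:ℂ)+1) ≠ 0 := by
      have := Complex.integerComplement_add_ne_zero hmem (n+1)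
      push_cast at this; exact this
    have e3 : (t:ℂ)^2 + (2*π*(n+1))^2 ≠ 0 := by
      have : t^2 + (2*π*((n:ℝ)+1))^2 ≠ 0 := by positivity
      exact_mod_cast this
    have e4 : (x - ((n:ℂ)+1)) * (x + ((n:ℂ)+1)) = -((t:ℂ)^2 + (2*π*(n+1))^2) / (2*π)^2 := by
      rw [hx]; field_simp; ring_nf; simp
    rw [div_add_div _ _ e1 e2, e4]
    push_cast
    have : (1 * (x + ((n:ℂ) + 1)) + (x - (n + 1)) * 1) = Complex.I * t / π := by
      rw [hx]; field_simp; ring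
    rw [this]
    field_simp
    ring
  simp_rw [hterm] at h
  rw [tsum_mul_left, ← Complex.ofReal_tsum] at h
  set S := ∑' n : ℕ, t / (t ^ 2 + (2 * π * ((n:ℝ) + 1)) ^ 2)
  have hElt : Real.exp (-t) < 1 := by rw [Real.exp_lt_one_iff]; linarith
  set E := Real.exp (-t)
  have hE1 : (1 - E) ≠ 0 := by linarith
  have hE1c : (1 - (E:ℂ)) ≠ 0 := by exact_mod_cast hE1
  have hfin : (1:ℂ) / (1 - (E:ℂ)) = 1 / t + 1 / 2 + 2 * (S:ℂ) := by
    have hS : (S:ℂ) = (π * ((E + 1) / (Complex.I * (1 - E))) - 1 / x) / (-4 * π * Complex.I) := by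
      rw [h]; field_simp
    rw [hS, hx]
    field_simp
    ring_nf
    simp
    ring
  apply Complex.ofReal_injective; push_cast; exact hfin

lemma hz_log (z x : ℝ) (hz : 0 < z) :
    Complex.log (z + x * Complex.I) =
      ((Real.log (x ^ 2 + z ^ 2) / 2 : ℝ) : ℂ) + (Real.arctan (x / z) : ℝ) * Complex.I := by
  apply Complex.ext
  · rw [Complex.log_re, Complex.norm_add_mul_I, Real.log_sqrt (by positivity)]
    simp [add_comm, -Complex.ofReal_arctan]
  · rw [Complex.log_im]
    have h1 : |Complex.arg (z + x * Complex.I)| < π / 2 :=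
      Complex.abs_arg_lt_pi_div_two_iff.2 (Or.inl (by simpa using hz))
    have h2 := Complex.tan_arg (z + x * Complex.I)
    rw [abs_lt] at h1
    have h3 := Real.arctan_tan h1.1 h1.2
    rw [h2] at h3
    rw [← h3]
    simp [-Complex.ofReal_arctan]

lemma hz_inner (s : ℂ) (hs : 0 < s.re) (z x : ℝ) (hz : 0 < z) :
    ∫ t in Set.Ioi (0:ℝ), (t : ℂ) ^ (s - 1) * Complex.exp (-(z * t)) * (Real.sin (x * t) : ℂ) =
      Complex.Gamma s * (Complex.exp (-(s * (Real.log (x ^ 2 + z ^ 2) / 2 : ℝ))) *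
        Complex.sin (s * (Real.arctan (x / z) : ℝ))) := by
  have hp := hz_log z x hz
  have hm := hz_log z (-x) hz
  have hrp : 0 < ((z:ℂ) + (x:ℝ) * Complex.I).re := by simpa using hz
  have hrm : 0 < ((z:ℂ) + (-x:ℝ) * Complex.I).re := by simpa using hz
  have lp := hz_laplace s _ hs hrp
  have lm := hz_laplace s _ hs hrm
  have ip := hz_int_cpow (s - 1) _ (by simpa using hs) hrp
  have im := hz_int_cpow (s - 1) _ (by simpa using hs) hrm
  have hsplit : ∀ t : ℝ, (t : ℂ) ^ (s - 1) * Complex.exp (-(z * t)) * (Real.sin (x * t) : ℂ) =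
      (Complex.I / 2) * ((t : ℂ) ^ (s - 1) * Complex.exp (-(((z:ℂ) + (x:ℝ) * Complex.I) * t))
        - (t : ℂ) ^ (s - 1) * Complex.exp (-(((z:ℂ) + (-x:ℝ) * Complex.I) * t))) := by
    intro t
    rw [show -(((z:ℂ) + (x:ℝ) * Complex.I) * t) = -(z*t) + -(x * t) * Complex.I by ring,
      show -(((z:ℂ) + (-x:ℝ) * Complex.I) * t) = -(z*t) + (x * t) * Complex.I by push_cast; ring,
      Complex.exp_add, Complex.exp_add, Complex.ofReal_sin, Complex.sin]
    push_cast
    ring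
  simp_rw [hsplit]
  rw [integral_const_mul, integral_sub ip im, lp, lm, hp, hm, Complex.sin]
  have e1 : ((-x)^2 + z^2) = x^2 + z^2 := by ring
  have e2 : Real.arctan (-x / z) = - Real.arctan (x/z) := by rw [neg_div, Real.arctan_neg]
  rw [e1, e2]
  set L := Real.log (x ^ 2 + z ^ 2) / 2
  set θ := Real.arctan (x / z)
  rw [show -(s * ((L:ℂ) + θ * Complex.I)) = -(s * L) + -(s * θ) * Complex.I by ring,
    show -(s * ((L:ℂ) + (-θ : ℝ) * Complex.I)) = -(s * L) + (s * θ) * Complex.I by push_cast; ring,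
    Complex.exp_add, Complex.exp_add]
  ring

lemma hz_w_pos (x : ℝ) (hx : 0 < x) : 0 < 1 / (Real.exp (2 * π * x) - 1) := by
  have : 1 < Real.exp (2*π*x) := by
    rw [Real.one_lt_exp_iff]; have := pi_pos; positivity
  have : 0 < Real.exp (2*π*x) - 1 := by linarith
  positivity

lemma hz_w_bound (x : ℝ) (hx : 0 < x) :
    x * (1 / (Real.exp (2 * π * x) - 1)) ≤ Real.exp (-(π * x)) := by
  have hpi := pi_pos
  have hpi3 := pi_gt_three
  have h0 : 0 < π * x := by positivity
  have h1 : π * x ≤ Real.sinh (π * x) := Real.self_le_sinh_iff.2 h0.le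
  rw [Real.sinh_eq] at h1
  have h2 : Real.exp (2*π*x) = Real.exp (π*x) * Real.exp (π*x) := by rw [← Real.exp_add]; ring_nf
  have h3 : Real.exp (π*x) * Real.exp (-(π*x)) = 1 := by rw [← Real.exp_add]; simp
  have hp := Real.exp_pos (π*x)
  have hw := hz_w_pos x hx
  rw [one_div_pos] at hw
  rw [mul_one_div, div_le_iff₀ hw, h2, mul_sub, ← mul_assoc, mul_comm (Real.exp (-(π*x))), h3]
  nlinarith

lemma hz_w_meas : Measurable (fun x : ℝ => 1 / (Real.exp (2 * π * x) - 1)) := by fun_prop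

lemma hz_xw_int : IntegrableOn (fun x : ℝ => x * (1 / (Real.exp (2 * π * x) - 1))) (Set.Ioi 0) := by
  have h : IntegrableOn (fun x : ℝ => Real.exp (-(π * x))) (Set.Ioi 0) := by
    simpa using exp_neg_integrableOn_Ioi 0 pi_pos
  refine Integrable.mono' h (measurable_id.mul hz_w_meas).aestronglyMeasurable ?_
  refine (ae_restrict_iff' measurableSet_Ioi).2 (ae_of_all _ fun x (hx : 0 < x) => ?_)
  rw [Real.norm_eq_abs, abs_of_pos (mul_pos hx (hz_w_pos x hx))]
  exact hz_w_bound x hx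

lemma hz_fubini (s : ℂ) (hs : 1 < s.re) (z : ℝ) (hz : 0 < z) :
    Integrable (Function.uncurry fun (t x : ℝ) =>
      (t : ℂ) ^ (s - 1) * Complex.exp (-(z * t)) * (Real.sin (x * t) : ℂ) *
        ((1 / (Real.exp (2 * π * x) - 1) : ℝ) : ℂ))
      ((volume.restrict (Set.Ioi (0:ℝ))).prod (volume.restrict (Set.Ioi (0:ℝ)))) := by
  have hb := (hz_int_rpow s.re z (by linarith) hz).integrable.mul_prod hz_xw_int.integrable
  refine hb.mono' ?_ ?_
  · refine AEStronglyMeasurable.mul (AEStronglyMeasurable.mul ?_ ?_) ?_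
    · exact (hz_meas_cpow (s-1) z).comp_fst
    · apply Continuous.aestronglyMeasurable; fun_prop
    · apply Measurable.aestronglyMeasurable
      exact Complex.measurable_ofReal.comp (hz_w_meas.comp measurable_snd)
  · rw [Measure.prod_restrict]
    refine (ae_restrict_iff' (measurableSet_Ioi.prod measurableSet_Ioi)).2 (ae_of_all _ ?_)
    rintro ⟨t, x⟩ ⟨ht, hx⟩
    simp only [Set.mem_Ioi] at ht hx
    have hw := hz_w_pos x hx
    simp only [Function.uncurry]
    rw [norm_mul, norm_mul, hz_norm_cpow_exp _ _ t ht, Complex.norm_real, Complex.norm_real,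
      Real.norm_eq_abs, Real.norm_eq_abs, abs_of_pos hw]
    simp only [Complex.sub_re, Complex.one_re, Complex.ofReal_re]
    have h1 : |Real.sin (x * t)| ≤ x * t := by
      simpa [abs_of_pos (mul_pos hx ht)] using Real.abs_sin_le_abs (x := x * t)
    rw [Real.rpow_sub_one ht.ne']
    calc t ^ s.re / t * Real.exp (-(z * t)) * |Real.sin (x * t)| * (1 / (Real.exp (2 * π * x) - 1))
        ≤ t ^ s.re / t * Real.exp (-(z * t)) * (x * t) * (1 / (Real.exp (2 * π * x) - 1)) := by
          gcongr
      _ = _ := by field_simp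

/-- the Hermite integral -/
noncomputable def hzI (z : ℝ) (s : ℂ) : ℂ :=
  ∫ x in Set.Ioi (0:ℝ), (Complex.exp (-(s * (Real.log (x ^ 2 + z ^ 2) / 2 : ℝ))) *
        Complex.sin (s * (Real.arctan (x / z) : ℝ))) * ((1 / (Real.exp (2 * π * x) - 1) : ℝ) : ℂ)

lemma hz_double (s : ℂ) (hs : 1 < s.re) (z : ℝ) (hz : 0 < z) :
    IntegrableOn (fun t : ℝ => (t : ℂ) ^ (s - 1) * Complex.exp (-(z * t)) *
      ((∫ x in Set.Ioi (0:ℝ), Real.sin (x * t) * (1 / (Real.exp (2 * π * x) - 1)) : ℝ) : ℂ))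
      (Set.Ioi 0) ∧
    ∫ t in Set.Ioi (0:ℝ), (t : ℂ) ^ (s - 1) * Complex.exp (-(z * t)) *
      ((∫ x in Set.Ioi (0:ℝ), Real.sin (x * t) * (1 / (Real.exp (2 * π * x) - 1)) : ℝ) : ℂ) =
      Complex.Gamma s * hzI z s := by
  have hf := hz_fubini s hs z hz
  have e : ∀ t : ℝ, (∫ x in Set.Ioi (0:ℝ), (t : ℂ) ^ (s - 1) * Complex.exp (-(z * t)) *
      (Real.sin (x * t) : ℂ) * ((1 / (Real.exp (2 * π * x) - 1) : ℝ) : ℂ)) =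
      (t : ℂ) ^ (s - 1) * Complex.exp (-(z * t)) *
      ((∫ x in Set.Ioi (0:ℝ), Real.sin (x * t) * (1 / (Real.exp (2 * π * x) - 1)) : ℝ) : ℂ) := by
    intro t
    rw [← integral_complex_ofReal, ← integral_const_mul]
    congr 1; funext x
    push_cast; ring
  constructor
  · exact hf.integral_prod_left.congr (ae_of_all _ fun t => e t)
  · simp_rw [← e]
    rw [integral_integral_swap hf, hzI, ← integral_const_mul]
    congr 1; funext x
    rw [integral_mul_const, hz_inner s (by linarith) z x hz]
    ring

lemma hz_real_hasSum (s : ℂ) (hs : 1 < s.re) (z : ℝ) (hz : 0 < z) :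
    HasSum (fun n : ℕ => 1 / ((n + z : ℝ) : ℂ) ^ s) (hurwitzZetaReal s z) := by
  have hc : 1 ≤ ⌈z⌉₊ := Nat.one_le_ceil_iff.2 hz
  obtain ⟨N, hN⟩ : ∃ N, ⌈z⌉₊ = N + 1 := ⟨⌈z⌉₊ - 1, by omega⟩
  have h1 : z ≤ N + 1 := by have := Nat.le_ceil z; rw [hN] at this; exact_mod_cast this
  have h2 : (N : ℝ) < z := by
    have : N < ⌈z⌉₊ := by omega
    exact Nat.lt_ceil.1 this
  have h := HurwitzZeta.hasSum_hurwitzZeta_of_one_lt_re (a := z - N)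
    ⟨by linarith, by linarith⟩ hs
  have hcoe : (((z - N : ℝ)) : UnitAddCircle) = (z : UnitAddCircle) := by
    rw [AddCircle.coe_sub]
    have : ((N : ℝ) : UnitAddCircle) = 0 := by
      have := AddCircle.coe_period (1:ℝ)
      rw [show (N : ℝ) = N • (1:ℝ) by simp, AddCircle.coe_nsmul, this, smul_zero]
    rw [this, sub_zero]
  rw [hcoe] at h
  have h' := (hasSum_nat_add_iff' N).2 h
  rw [hurwitzZetaReal, hN]
  convert! h' using 1
  · funext n
    push_cast
    congr 2; ring
  · congr 1
    refine Finset.sum_congr (by simp) fun k _ => ?_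
    rw [Complex.cpow_neg, one_div]
    push_cast
    congr 2; ring

lemma hz_hermite (s : ℂ) (hs : 1 < s.re) (z : ℝ) (hz : 0 < z) :
    hurwitzZetaReal s z = Complex.exp (-(s * (Real.log z : ℝ))) / 2 +
      Complex.exp (-((s - 1) * (Real.log z : ℝ))) / (s - 1) + 2 * hzI z s := by
  have h0 := hz_real_hasSum s hs z hz
  have hm := hasSum_mellin (a := fun _ : ℕ => (1:ℂ)) (p := fun n => (n:ℝ) + z)
    (F := fun t => ((Real.exp (-(z*t)) * (1 / (1 - Real.exp (-t))) : ℝ) : ℂ)) (s := s)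
    (fun n => Or.inr (by positivity)) (by linarith) ?_ ?_
  rotate_left
  · intro t ht
    have ht : 0 < t := ht
    have hlt : Real.exp (-t) < 1 := by rw [Real.exp_lt_one_iff]; linarith
    have h := (hasSum_geometric_of_lt_one (Real.exp_pos _).le hlt).mul_left (Real.exp (-(z*t)))
    have h := Complex.hasSum_ofReal.2 h
    convert! h using 1
    · funext n
      rw [one_mul, ← Real.exp_nat_mul, ← Real.exp_add]; ring_nf
    · simp
  · have := h0.summable.norm
    refine this.congr fun n => ?_
    rw [norm_div, Complex.norm_cpow_eq_rpow_re_of_pos (by positivity)]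
  have hG : Complex.Gamma s ≠ 0 := Complex.Gamma_ne_zero_of_re_pos (by linarith)
  have hE : Complex.Gamma s * hurwitzZetaReal s z =
      mellin (fun t => ((Real.exp (-(z*t)) * (1 / (1 - Real.exp (-t))) : ℝ) : ℂ)) s := by
    refine HasSum.unique ?_ hm
    convert! h0.mul_left (Complex.Gamma s) using 1
    funext n; simp [div_eq_mul_inv]
  apply mul_left_cancel₀ hG
  rw [hE, mellin]
  have hd := hz_double s hs z hz
  have hzr : 0 < (z:ℂ).re := by simpa using hz
  have i1 := hz_int_cpow (s - 1 - 1) z (by simp; linarith) hzr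
  have i2 := hz_int_cpow (s - 1) z (by simp; linarith) hzr
  have l1 := hz_laplace (s - 1) z (by simp; linarith) hzr
  have l2 := hz_laplace s z (by linarith) hzr
  have : ∫ t in Set.Ioi (0:ℝ), (t:ℂ) ^ (s - 1) •
        ((Real.exp (-(z*t)) * (1 / (1 - Real.exp (-t))) : ℝ) : ℂ) =
      ∫ t in Set.Ioi (0:ℝ), ((t:ℂ) ^ (s - 1 - 1) * Complex.exp (-(z * t)) +
        (1/2) * ((t:ℂ) ^ (s - 1) * Complex.exp (-(z * t))) +
        2 * ((t : ℂ) ^ (s - 1) * Complex.exp (-(z * t)) *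
      ((∫ x in Set.Ioi (0:ℝ), Real.sin (x * t) * (1 / (Real.exp (2 * π * x) - 1)) : ℝ) : ℂ))) := by
    refine setIntegral_congr_fun measurableSet_Ioi fun t ht => ?_
    have ht : 0 < t := ht
    rw [hz_kernel t ht, smul_eq_mul, Complex.cpow_sub (s - 1) 1, Complex.cpow_one]
    swap
    · exact_mod_cast ht.ne'
    push_cast
    ring
  have i12 : IntegrableOn (fun t : ℝ => (t:ℂ) ^ (s - 1 - 1) * Complex.exp (-(z * t)) +
        (1/2) * ((t:ℂ) ^ (s - 1) * Complex.exp (-(z * t)))) (Set.Ioi 0) :=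
    i1.add (i2.const_mul _)
  rw [this, integral_add i12 (hd.1.const_mul _),
    integral_add i1 (i2.const_mul _), integral_const_mul, integral_const_mul, hd.2, l1, l2]
  have hs1 : s - 1 ≠ 0 := by
    intro h; have := congrArg Complex.re h; simp at this; linarith
  have hGs : Complex.Gamma s = (s - 1) * Complex.Gamma (s - 1) := by
    have := Complex.Gamma_add_one (s - 1) hs1
    simpa using this
  rw [← Complex.ofReal_log hz.le, hGs]
  field_simp
  ring

lemma hz_norm_sin (w : ℂ) : ‖Complex.sin w‖ ≤ ‖w‖ * Real.exp ‖w‖ := by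
  have h1 := Complex.norm_exp_sub_sum_le_norm_mul_exp (-w * Complex.I) 1
  have h2 := Complex.norm_exp_sub_sum_le_norm_mul_exp (w * Complex.I) 1
  simp only [Finset.range_one, Finset.sum_singleton, pow_zero, Nat.factorial_zero, Nat.cast_one,
    div_one, norm_mul, norm_neg, Complex.norm_I, mul_one, pow_one] at h1 h2
  have h3 : Complex.sin w = ((Complex.exp (-w * Complex.I) - 1) - (Complex.exp (w * Complex.I) - 1))
      * (Complex.I / 2) := by rw [Complex.sin]; ring
  rw [h3, norm_mul]
  have h4 : ‖Complex.I / 2‖ = 1 / 2 := by simp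
  rw [h4]
  have := norm_sub_le (Complex.exp (-w * Complex.I) - 1) (Complex.exp (w * Complex.I) - 1)
  linarith

lemma hz_norm_cos (w : ℂ) : ‖Complex.cos w‖ ≤ Real.exp ‖w‖ := by
  have h1 := Complex.norm_exp_le_exp_norm (-w * Complex.I)
  have h2 := Complex.norm_exp_le_exp_norm (w * Complex.I)
  simp only [norm_mul, norm_neg, Complex.norm_I, mul_one] at h1 h2
  rw [Complex.cos, norm_div]
  have := norm_add_le (Complex.exp (w * Complex.I)) (Complex.exp (-w * Complex.I))
  have h4 : ‖(2:ℂ)‖ = 2 := by simp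
  rw [h4]
  linarith

lemma hz_theta (z x : ℝ) (hz : 0 < z) (hx : 0 < x) :
    0 < Real.arctan (x / z) ∧ Real.arctan (x / z) ≤ x / z ∧ Real.arctan (x / z) ≤ 2 := by
  have h0 : 0 < Real.arctan (x / z) := Real.arctan_pos.2 (by positivity)
  have h1 := Real.arctan_lt_pi_div_two (x / z)
  refine ⟨h0, ?_, ?_⟩
  · have := Real.lt_tan h0 h1
    rw [Real.tan_arctan] at this
    exact this.le
  · have := Real.pi_lt_four
    linarith

lemma hz_L (z : ℝ) (hz : 0 < z) (R : ℝ) (hR : 0 < R) :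
    ∃ c : ℝ, ∀ x : ℝ, 0 < x → R * |Real.log (x ^ 2 + z ^ 2) / 2| ≤ c + x := by
  set C := 1 + z + 1 / z with hC
  have hzi : 0 < 1 / z := by positivity
  have hC0 : 0 < C := by positivity
  refine ⟨R * Real.log C + 1 - R + R * Real.log R, fun x hx => ?_⟩
  have hlog : |Real.log (x ^ 2 + z ^ 2) / 2| ≤ Real.log (C * (1 + x)) := by
    rw [← Real.log_sqrt (by positivity), abs_le]
    have hs : 0 < √(x^2+z^2) := by positivity
    constructor
    · rw [neg_le, ← Real.log_inv]
      apply Real.log_le_log (by positivity)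
      have : z ≤ √(x^2+z^2) := Real.le_sqrt_of_sq_le (by nlinarith)
      calc (√(x^2+z^2))⁻¹ ≤ z⁻¹ := by gcongr
        _ = 1 / z := by rw [one_div]
        _ ≤ C * (1 + x) := by nlinarith
    · apply Real.log_le_log hs
      rw [Real.sqrt_le_left (by positivity)]
      have h1 : x + z ≤ C * (1 + x) := by nlinarith [mul_pos hz hx, mul_pos hzi hx]
      have h2 : 0 ≤ x + z := by positivity
      nlinarith [mul_pos hz hx]
  have h2 : Real.log ((1 + x) / R) ≤ (1 + x) / R - 1 := Real.log_le_sub_one_of_pos (by positivity)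
  rw [Real.log_div (by positivity) hR.ne'] at h2
  rw [Real.log_mul hC0.ne' (by positivity)] at hlog
  have h3 : R * ((1 + x) / R) = 1 + x := by field_simp
  have h4 := mul_le_mul_of_nonneg_left h2 hR.le
  have h5 := mul_le_mul_of_nonneg_left hlog hR.le
  nlinarith

noncomputable def hzF (z : ℝ) (s : ℂ) (x : ℝ) : ℂ :=
  (Complex.exp (-(s * (Real.log (x ^ 2 + z ^ 2) / 2 : ℝ))) *
        Complex.sin (s * (Real.arctan (x / z) : ℝ))) * ((1 / (Real.exp (2 * π * x) - 1) : ℝ) : ℂ)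

noncomputable def hzF' (z : ℝ) (s : ℂ) (x : ℝ) : ℂ :=
  (Complex.exp (-(s * (Real.log (x ^ 2 + z ^ 2) / 2 : ℝ))) * (-(Real.log (x ^ 2 + z ^ 2) / 2 : ℝ)) *
        Complex.sin (s * (Real.arctan (x / z) : ℝ)) +
    Complex.exp (-(s * (Real.log (x ^ 2 + z ^ 2) / 2 : ℝ))) *
      (Complex.cos (s * (Real.arctan (x / z) : ℝ)) * (Real.arctan (x / z) : ℝ))) *
      ((1 / (Real.exp (2 * π * x) - 1) : ℝ) : ℂ)

lemma hzF_meas (z : ℝ) (s : ℂ) : Measurable (hzF z s) := by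
  unfold hzF
  have h1 : Measurable fun x : ℝ => ((Real.log (x ^ 2 + z ^ 2) / 2 : ℝ) : ℂ) := by fun_prop
  have h2 : Measurable fun x : ℝ => ((Real.arctan (x / z) : ℝ) : ℂ) :=
    Complex.measurable_ofReal.comp (Real.measurable_arctan.comp (by fun_prop))
  have h3 := Complex.measurable_ofReal.comp hz_w_meas
  exact ((Complex.measurable_exp.comp (h1.const_mul s).neg).mul
    (Complex.measurable_sin.comp (h2.const_mul s))).mul h3

lemma hzF'_meas (z : ℝ) (s : ℂ) : Measurable (hzF' z s) := by
  unfold hzF'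
  have h1 : Measurable fun x : ℝ => ((Real.log (x ^ 2 + z ^ 2) / 2 : ℝ) : ℂ) := by fun_prop
  have h2 : Measurable fun x : ℝ => ((Real.arctan (x / z) : ℝ) : ℂ) :=
    Complex.measurable_ofReal.comp (Real.measurable_arctan.comp (by fun_prop))
  have h3 := Complex.measurable_ofReal.comp hz_w_meas
  have h4 := Complex.measurable_exp.comp (h1.const_mul s).neg
  exact (((h4.mul h1.neg).mul (Complex.measurable_sin.comp (h2.const_mul s))).add
    (h4.mul ((Complex.measurable_cos.comp (h2.const_mul s)).mul h2))).mul h3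

lemma hz_bounds (z : ℝ) (hz : 0 < z) (R : ℝ) (hR : 1 ≤ R) :
    ∃ K : ℝ, ∀ x : ℝ, 0 < x → ∀ s : ℂ, ‖s‖ ≤ R →
      ‖hzF z s x‖ ≤ K * Real.exp (-((π - 1) * x)) ∧ ‖hzF' z s x‖ ≤ K * Real.exp (-((π - 1) * x)) := by
  obtain ⟨c, hc⟩ := hz_L z hz (2 * R) (by linarith)
  refine ⟨R * Real.exp (2 * R) / z * Real.exp c, fun x hx s hs => ?_⟩
  have hLc := hc x hx
  obtain ⟨t0, t1, t2⟩ := hz_theta z x hz hx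
  have hw0 := hz_w_pos x hx
  have hwb := hz_w_bound x hx
  unfold hzF hzF'
  set L := Real.log (x ^ 2 + z ^ 2) / 2
  set θ := Real.arctan (x / z)
  set w := 1 / (Real.exp (2 * π * x) - 1)
  have hR0 : 0 < R := by linarith
  have hsθ : ‖s * (θ:ℂ)‖ = ‖s‖ * θ := by rw [norm_mul, Complex.norm_real, Real.norm_eq_abs, abs_of_pos t0]
  have hsθ1 : ‖s * (θ:ℂ)‖ ≤ R * θ := by rw [hsθ]; gcongr
  have hsθ2 : ‖s * (θ:ℂ)‖ ≤ 2 * R := by nlinarith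
  have hexp2 : Real.exp ‖s * (θ:ℂ)‖ ≤ Real.exp (2 * R) := Real.exp_le_exp.2 hsθ2
  have hsin : ‖Complex.sin (s * θ)‖ ≤ R * θ * Real.exp (2 * R) := by
    refine (hz_norm_sin _).trans ?_
    gcongr
  have hcos : ‖Complex.cos (s * θ)‖ ≤ Real.exp (2 * R) := (hz_norm_cos _).trans hexp2
  have hE : ‖Complex.exp (-(s * (L:ℂ)))‖ ≤ Real.exp (R * |L|) := by
    refine (Complex.norm_exp_le_exp_norm _).trans (Real.exp_le_exp.2 ?_)
    rw [norm_neg, norm_mul, Complex.norm_real, Real.norm_eq_abs]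
    gcongr
  have hnw : ‖(w:ℂ)‖ = w := by rw [Complex.norm_real, Real.norm_eq_abs, abs_of_pos hw0]
  have hfin : Real.exp (R * |L|) * Real.exp (R * |L|) * (R * θ * Real.exp (2*R)) * w ≤
      R * Real.exp (2 * R) / z * Real.exp c * Real.exp (-((π - 1) * x)) := by
    rw [← Real.exp_add]
    have e1 : Real.exp (R * |L| + R * |L|) ≤ Real.exp (c + x) := Real.exp_le_exp.2 (by linarith)
    have e2 : θ * w ≤ 1 / z * Real.exp (-(π * x)) := by
      calc θ * w ≤ x / z * w := by gcongr
        _ = 1 / z * (x * w) := by ring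
        _ ≤ _ := by gcongr
    have e3 : Real.exp (-((π - 1) * x)) = Real.exp x * Real.exp (-(π * x)) := by
      rw [← Real.exp_add]; ring_nf
    calc Real.exp (R * |L| + R * |L|) * (R * θ * Real.exp (2*R)) * w
        = Real.exp (R * |L| + R * |L|) * (R * Real.exp (2*R)) * (θ * w) := by ring
      _ ≤ Real.exp (c + x) * (R * Real.exp (2*R)) * (1 / z * Real.exp (-(π * x))) := by gcongr
      _ = _ := by rw [e3, Real.exp_add]; ring
  have h1e : 1 ≤ Real.exp (R * |L|) := Real.one_le_exp (by positivity)
  have h1l : R * |L| + 1 ≤ Real.exp (R * |L|) := Real.add_one_le_exp _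
  constructor
  · refine le_trans ?_ hfin
    rw [norm_mul, norm_mul, hnw]
    gcongr
    calc ‖Complex.exp (-(s * (L:ℂ)))‖ ≤ Real.exp (R * |L|) := hE
      _ ≤ Real.exp (R * |L|) * Real.exp (R * |L|) := by nlinarith
  · refine le_trans ?_ hfin
    rw [norm_mul, hnw]
    gcongr
    refine (norm_add_le _ _).trans ?_
    rw [norm_mul, norm_mul, norm_mul, norm_mul, norm_neg, Complex.norm_real, Complex.norm_real,
      Real.norm_eq_abs, Real.norm_eq_abs, abs_of_pos t0]
    calc _ ≤ Real.exp (R * |L|) * |L| * (R * θ * Real.exp (2*R)) +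
          Real.exp (R * |L|) * (Real.exp (2*R) * θ) := by gcongr
      _ = Real.exp (R * |L|) * (R * |L| + 1) * (θ * Real.exp (2*R)) := by ring
      _ ≤ Real.exp (R * |L|) * Real.exp (R * |L|) * (θ * Real.exp (2*R)) := by gcongr
      _ ≤ Real.exp (R * |L|) * Real.exp (R * |L|) * (R * θ * Real.exp (2*R)) := by
          gcongr; nlinarith

lemma hz_I_deriv (z : ℝ) (hz : 0 < z) (s : ℂ) :
    IntegrableOn (hzF' z s) (Set.Ioi 0) ∧
    HasDerivAt (hzI z) (∫ x in Set.Ioi (0:ℝ), hzF' z s x) s := by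
  obtain ⟨K, hK⟩ := hz_bounds z hz (‖s‖ + 1) (by linarith [norm_nonneg s])
  have hint : IntegrableOn (fun x : ℝ => K * Real.exp (-((π - 1) * x))) (Set.Ioi 0) := by
    have := exp_neg_integrableOn_Ioi 0 (b := π - 1) (by linarith [pi_gt_three])
    refine Integrable.const_mul ?_ K
    simp only [neg_mul] at this
    exact this
  have key := hasDerivAt_integral_of_dominated_loc_of_deriv_le
      (μ := volume.restrict (Set.Ioi (0:ℝ)))
      (F := hzF z) (F' := hzF' z) (bound := fun x => K * Real.exp (-((π - 1) * x)))
      (x₀ := s) (s := Metric.ball s 1) ?_ ?_ ?_ ?_ ?_ ?_ ?_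
  · exact key
  · exact Metric.ball_mem_nhds _ one_pos
  · exact Eventually.of_forall fun w => (hzF_meas z w).aestronglyMeasurable
  · refine hint.mono' (hzF_meas z s).aestronglyMeasurable ?_
    exact (ae_restrict_iff' measurableSet_Ioi).2 (ae_of_all _ fun x hx => (hK x hx s (by linarith)).1)
  · exact (hzF'_meas z s).aestronglyMeasurable
  · refine (ae_restrict_iff' measurableSet_Ioi).2 (ae_of_all _ fun x hx w hw => (hK x hx w ?_).2)
    rw [mem_ball_iff_norm] at hw
    have := norm_le_norm_add_norm_sub' w s
    linarith
  · exact hint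
  · refine ae_of_all _ fun x w _ => ?_
    unfold hzF hzF'
    apply HasDerivAt.mul_const
    apply HasDerivAt.mul
    · apply HasDerivAt.cexp
      simpa only [one_mul, id] using
        ((hasDerivAt_id w).mul_const ((Real.log (x ^ 2 + z ^ 2) / 2 : ℝ) : ℂ)).fun_neg
    · apply HasDerivAt.csin
      simpa only [one_mul, id] using
        ((hasDerivAt_id w).mul_const ((Real.arctan (x / z) : ℝ) : ℂ))

lemma hz_F'_neg_one (z x : ℝ) (hz : 0 < z) :
    hzF' z (-1) x = ((z * (Real.arctan (x / z) / (Real.exp (2 * π * x) - 1)) +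
      (1 / 2) * (x * Real.log (x ^ 2 + z ^ 2) / (Real.exp (2 * π * x) - 1)) : ℝ) : ℂ) := by
  have hl := hz_log z x hz
  have hne : (z + x * Complex.I : ℂ) ≠ 0 := by
    intro h; have := congrArg Complex.re h; simp at this; linarith
  have he := Complex.exp_log hne
  rw [hl] at he
  have hre := congrArg Complex.re he
  have him := congrArg Complex.im he
  unfold hzF'
  set L := Real.log (x ^ 2 + z ^ 2) / 2 with hL
  have hL2 : Real.log (x ^ 2 + z ^ 2) = 2 * L := by rw [hL]; ring
  rw [hL2]
  set θ := Real.arctan (x / z)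
  rw [Complex.exp_re] at hre
  rw [Complex.exp_im] at him
  simp at hre him
  have e : Complex.exp (-(-1 * (L:ℂ))) = (Real.exp L : ℝ) := by push_cast; ring_nf
  have e2 : Complex.sin (-1 * (θ:ℂ)) = -(Real.sin θ : ℝ) := by push_cast; simp
  have e3 : Complex.cos (-1 * (θ:ℂ)) = (Real.cos θ : ℝ) := by push_cast; simp
  rw [e, e2, e3]
  norm_cast
  rw [← hre, ← him]
  ring

lemma hz_real_diff (z : ℝ) (hz : 0 < z) (s : ℂ) (hs : s ≠ 1) :
    DifferentiableAt ℂ (fun s => hurwitzZetaReal s z) s := by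
  unfold hurwitzZetaReal
  refine (HurwitzZeta.differentiableAt_hurwitzZeta _ hs).sub ?_
  refine DifferentiableAt.fun_sum fun k _ => ?_
  refine DifferentiableAt.const_cpow (by fun_prop) (Or.inl ?_)
  have := Nat.ceil_lt_add_one hz.le
  have hk : (0:ℝ) ≤ k := Nat.cast_nonneg k
  have : (z - (⌈z⌉₊ - 1) + k : ℝ) ≠ 0 := by
    apply ne_of_gt; linarith
  exact_mod_cast this

noncomputable def hzH (z : ℝ) (s : ℂ) : ℂ :=
  Complex.exp (-(s * (Real.log z : ℝ))) / 2 +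
      Complex.exp (-((s - 1) * (Real.log z : ℝ))) / (s - 1) + 2 * hzI z s

lemma hz_H_deriv (z : ℝ) (hz : 0 < z) (s : ℂ) (hs : s ≠ 1) :
    HasDerivAt (hzH z) (Complex.exp (-(s * (Real.log z : ℝ))) * (-(Real.log z : ℝ)) / 2 +
      (Complex.exp (-((s - 1) * (Real.log z : ℝ))) * (-(Real.log z : ℝ)) * (s - 1) -
        Complex.exp (-((s - 1) * (Real.log z : ℝ))) * 1) / (s - 1) ^ 2 +
      2 * ∫ x in Set.Ioi (0:ℝ), hzF' z s x) s := by
  unfold hzH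
  have h1 : HasDerivAt (fun s : ℂ => Complex.exp (-(s * (Real.log z : ℝ))))
      (Complex.exp (-(s * (Real.log z : ℝ))) * (-(Real.log z : ℝ))) s := by
    apply HasDerivAt.cexp
    simpa only [one_mul, id] using ((hasDerivAt_id s).mul_const ((Real.log z : ℝ) : ℂ)).fun_neg
  have h2 : HasDerivAt (fun s : ℂ => Complex.exp (-((s - 1) * (Real.log z : ℝ))))
      (Complex.exp (-((s - 1) * (Real.log z : ℝ))) * (-(Real.log z : ℝ))) s := by
    apply HasDerivAt.cexp
    simpa only [one_mul, id] using
      (((hasDerivAt_id s).sub_const 1).mul_const ((Real.log z : ℝ) : ℂ)).fun_neg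
  have h3 : HasDerivAt (fun s : ℂ => s - 1) 1 s := (hasDerivAt_id s).sub_const 1
  exact ((h1.div_const 2).add (h2.div h3 (sub_ne_zero.2 hs))).add
    ((hz_I_deriv z hz s).2.const_mul 2)

lemma hz_eqOn (z : ℝ) (hz : 0 < z) :
    Set.EqOn (fun s => hurwitzZetaReal s z) (hzH z) {1}ᶜ := by
  refine AnalyticOnNhd.eqOn_of_preconnected_of_eventuallyEq (𝕜 := ℂ) (z₀ := 2) ?_ ?_
    (isConnected_compl_singleton_of_one_lt_rank (by simp) 1).isPreconnected (by simp) ?_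
  · exact DifferentiableOn.analyticOnNhd
      (fun s hs => (hz_real_diff z hz s hs).differentiableWithinAt) isOpen_compl_singleton
  · exact DifferentiableOn.analyticOnNhd
      (fun s hs => (hz_H_deriv z hz s hs).differentiableAt.differentiableWithinAt)
      isOpen_compl_singleton
  · have : {s : ℂ | 1 < s.re} ∈ nhds (2:ℂ) :=
      (isOpen_lt continuous_const Complex.continuous_re).mem_nhds (by simp)
    filter_upwards [this] with s hs
    exact hz_hermite s hs z hz

/-- Hermite-type integral representation of ζ'(-1, z) for z > 0. -/
theorem hurwitzZetaDerivNegOne_eq_hermite_integral (z : ℝ) (hz : 0 < z) :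
    hurwitzZetaDerivNegOne z =
      ((z ^ 2 / 2 * Real.log z - z ^ 2 / 4 - z / 2 * Real.log z
        + 2 * z * (∫ x in Set.Ioi (0 : ℝ), Real.arctan (x / z) / (Real.exp (2 * π * x) - 1))
        + (∫ x in Set.Ioi (0 : ℝ),
            x * Real.log (x ^ 2 + z ^ 2) / (Real.exp (2 * π * x) - 1)) : ℝ) : ℂ) := by
  have hev : (fun s => hurwitzZetaReal s z) =ᶠ[nhds (-1)] hzH z := by
    have hm : ({1}ᶜ : Set ℂ) ∈ nhds (-1 : ℂ) := isOpen_compl_singleton.mem_nhds (by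
      simp only [Set.mem_compl_iff, Set.mem_singleton_iff]; norm_num)
    filter_upwards [hm] with s hs
    exact hz_eqOn z hz hs
  unfold hurwitzZetaDerivNegOne
  rw [hev.deriv_eq, (hz_H_deriv z hz (-1) (by norm_num)).deriv]
  have hI := (hz_I_deriv z hz (-1)).1
  simp_rw [funext fun x => hz_F'_neg_one z x hz] at hI ⊢
  have hR : IntegrableOn (fun x : ℝ => z * (Real.arctan (x / z) / (Real.exp (2 * π * x) - 1)) +
      (1 / 2) * (x * Real.log (x ^ 2 + z ^ 2) / (Real.exp (2 * π * x) - 1))) (Set.Ioi 0) := by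
    have := hI.re
    simp only [RCLike.re_to_complex, Complex.ofReal_re] at this
    exact this
  have hA : IntegrableOn (fun x : ℝ => Real.arctan (x / z) / (Real.exp (2 * π * x) - 1))
      (Set.Ioi 0) := by
    refine Integrable.mono' (hz_xw_int.const_mul (1 / z)) ?_ ?_
    · have : Measurable fun x : ℝ => Real.arctan (x / z) :=
        Real.measurable_arctan.comp (by fun_prop)
      exact (this.div (by fun_prop)).aestronglyMeasurable
    · refine (ae_restrict_iff' measurableSet_Ioi).2 (ae_of_all _ fun x (hx : 0 < x) => ?_)
      obtain ⟨t0, t1, -⟩ := hz_theta z x hz hx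
      have hw := hz_w_pos x hx
      rw [← mul_one_div, Real.norm_eq_abs, abs_of_pos (mul_pos t0 hw)]
      calc _ ≤ x / z * (1 / (Real.exp (2 * π * x) - 1)) := by gcongr
        _ = _ := by ring
  have hB : IntegrableOn (fun x : ℝ =>
      (1 / 2) * (x * Real.log (x ^ 2 + z ^ 2) / (Real.exp (2 * π * x) - 1))) (Set.Ioi 0) := by
    have := hR.sub (hA.const_mul z)
    refine this.congr (ae_of_all _ fun x => ?_)
    simp
  rw [integral_complex_ofReal, integral_add (hA.const_mul z) hB, integral_const_mul,
    integral_const_mul]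
  have e1 : Complex.exp (-(-1 * ((Real.log z : ℝ) : ℂ))) = (z : ℝ) := by
    rw [show -(-1 * ((Real.log z : ℝ) : ℂ)) = ((Real.log z : ℝ) : ℂ) by ring, ← Complex.ofReal_exp,
      Real.exp_log hz]
  have e2 : Complex.exp (-((-1 - 1) * ((Real.log z : ℝ) : ℂ))) = (z : ℂ) ^ 2 := by
    rw [show -((-1 - 1) * ((Real.log z : ℝ) : ℂ)) = ((Real.log z : ℝ) : ℂ) + ((Real.log z : ℝ) : ℂ)
      by ring, Complex.exp_add, ← Complex.ofReal_exp, Real.exp_log hz, sq]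
  rw [e1, e2]
  push_cast
  ring
end

section
/- The Barnes G-function satisfies log G(1/2) = 1/8 + (log 2)/24 − (log π)/4 − (3/2)·log A. -/
open Real MeasureTheory Filter

lemma hz_half_of_one_lt {s : ℂ} (hs : 1 < s.re) :
    HurwitzZeta.hurwitzZeta ((1 / 2 : ℝ) : UnitAddCircle) s = (2 ^ s - 1) * riemannZeta s := by
  have h2 : (2 : ℂ) ^ s ≠ 0 := by simp [Complex.cpow_eq_zero_iff]
  have hH := HurwitzZeta.hasSum_hurwitzZeta_of_one_lt_re (a := 1 / 2)
    ⟨by norm_num, by norm_num⟩ hs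
  have hZ : HasSum (fun n : ℕ => 1 / (n : ℂ) ^ s) (riemannZeta s) := by
    rw [zeta_eq_tsum_one_div_nat_cpow hs]
    exact (Complex.summable_one_div_nat_cpow.mpr hs).hasSum
  have he : HasSum (fun n : ℕ => 1 / ((2 * n : ℕ) : ℂ) ^ s) ((2 ^ s)⁻¹ * riemannZeta s) := by
    have := hZ.mul_left ((2 ^ s)⁻¹)
    refine (funext fun n => ?_ : (fun n : ℕ => 1 / ((2 * n : ℕ) : ℂ) ^ s) =
      fun n : ℕ => (2 ^ s)⁻¹ * (1 / (n : ℂ) ^ s)) ▸ this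
    rw [Nat.cast_mul, Complex.natCast_mul_natCast_cpow]
    simp [mul_comm]
  have ho : HasSum (fun n : ℕ => 1 / ((2 * n + 1 : ℕ) : ℂ) ^ s) ((2 ^ s)⁻¹ *
      HurwitzZeta.hurwitzZeta ((1 / 2 : ℝ) : UnitAddCircle) s) := by
    have := hH.mul_left ((2 ^ s)⁻¹)
    refine (funext fun n => ?_ : (fun n : ℕ => 1 / ((2 * n + 1 : ℕ) : ℂ) ^ s) =
      fun n : ℕ => (2 ^ s)⁻¹ * (1 / (n + ((1 / 2 : ℝ) : ℂ)) ^ s)) ▸ this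
    have e : ((2 * n + 1 : ℕ) : ℂ) = ((2 : ℝ) : ℂ) * ((n + 1 / 2 : ℝ) : ℂ) := by
      push_cast; ring
    rw [e, Complex.mul_cpow_ofReal_nonneg (by norm_num) (by positivity)]
    push_cast
    simp [mul_comm]
  have := HasSum.unique (HasSum.even_add_odd (f := fun n : ℕ => 1 / (n : ℂ) ^ s) he ho) hZ
  generalize HurwitzZeta.hurwitzZeta ((1 / 2 : ℝ) : UnitAddCircle) s = H at *
  field_simp at this
  linear_combination this

lemma hz_half {s : ℂ} (hs : s ≠ 1) :
    HurwitzZeta.hurwitzZeta ((1 / 2 : ℝ) : UnitAddCircle) s = (2 ^ s - 1) * riemannZeta s := by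
  have hd1 : DifferentiableOn ℂ (HurwitzZeta.hurwitzZeta ((1 / 2 : ℝ) : UnitAddCircle)) {1}ᶜ :=
    fun z hz => (HurwitzZeta.differentiableAt_hurwitzZeta _ hz).differentiableWithinAt
  have hd2 : DifferentiableOn ℂ (fun s : ℂ => (2 ^ s - 1) * riemannZeta s) {1}ᶜ :=
    fun z hz => ((((differentiableAt_id).const_cpow (Or.inl two_ne_zero)).sub_const 1).mul
      (differentiableAt_riemannZeta hz)).differentiableWithinAt
  have ho : IsOpen ({1}ᶜ : Set ℂ) := isOpen_compl_singleton
  have hc : IsPreconnected ({1}ᶜ : Set ℂ) :=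
    (isConnected_compl_singleton_of_one_lt_rank (by simp) 1).isPreconnected
  refine (hd1.analyticOnNhd ho).eqOn_of_preconnected_of_eventuallyEq (hd2.analyticOnNhd ho) hc
    (z₀ := 2) (by simp) ?_ hs
  filter_upwards [(isOpen_lt continuous_const Complex.continuous_re).mem_nhds
    (show (1 : ℝ) < (2 : ℂ).re by simp)] with z hz
  exact hz_half_of_one_lt hz

lemma deriv_half : hurwitzZetaDerivNegOne (1 / 2) =
    - Real.log 2 / 24 - deriv riemannZeta (-1) / 2 := by
  have hceil : ⌈(1 / 2 : ℝ)⌉₊ = 1 := by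
    rw [Nat.ceil_eq_iff] <;> norm_num
  have hn : (-1 : ℂ) ≠ 1 := by norm_num
  have hev : (fun s => hurwitzZetaReal s (1 / 2)) =ᶠ[nhds (-1)]
      fun s : ℂ => (2 ^ s - 1) * riemannZeta s := by
    filter_upwards [isOpen_compl_singleton.mem_nhds (show (-1 : ℂ) ∈ ({1}ᶜ : Set ℂ) from hn)]
      with z hz
    rw [hurwitzZetaReal, hceil, hz_half hz]
    simp
  have hz1 : riemannZeta (-1) = -1 / 12 := by
    have := riemannZeta_neg_nat_eq_bernoulli 1
    norm_num [bernoulli_two] at this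
    rw [this]; try norm_num
  have hD := (((hasDerivAt_id (-1 : ℂ)).const_cpow (c := 2) (Or.inl two_ne_zero)).sub_const 1).mul
      (differentiableAt_riemannZeta hn).hasDerivAt
  have hl : Complex.log 2 = (Real.log 2 : ℝ) := by
    rw [Complex.ofReal_log (by norm_num)]; simp
  rw [hurwitzZetaDerivNegOne, hev.deriv_eq]
  refine hD.deriv.trans ?_
  simp only [id, hz1, hl, Complex.cpow_neg_one]
  ring

/-- log G(1/2) = 1/8 + (log 2)/24 − (log π)/4 − (3/2) log A. -/
theorem logBarnesG_one_half :
    logBarnesG (1 / 2) =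
      1 / 8 + (Real.log 2) / 24 - (Real.log π) / 4 - (3 / 2) * logA := by
  have hg : Real.log (Real.Gamma (1 / 2)) = Real.log π / 2 := by
    rw [Real.Gamma_one_half_eq, Real.log_sqrt Real.pi_pos.le]
  rw [logBarnesG, if_pos (by norm_num), logBarnesG1p, deriv_half, logA, hg]
  push_cast
  ring
end

section
/- The Barnes G-function satisfies log G(1/4) = 3/32 − K/(4π) − (3/4)·log Γ(1/4) − (9/8)·log A, where K is Catalan's constant. -/
open Real MeasureTheory Filter

open HurwitzZeta in
lemma even_quarter {s : ℂ} (hs : s ≠ 1) :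
    hurwitzZetaEven ((1 / 4 : ℝ) : UnitAddCircle) s =
      ((4 : ℂ) ^ s * (1 - (2 : ℂ) ^ (-s))) / 2 * riemannZeta s := by
  have h := DirichletCharacter.LFunctionTrivChar_eq_mul_riemannZeta (N := 4) hs
  have hp : (4 : ℕ).primeFactors = {2} := by
    rw [show (4 : ℕ) = 2 ^ 2 by norm_num, Nat.primeFactors_prime_pow (by norm_num) Nat.prime_two]
  rw [hp, Finset.prod_singleton, DirichletCharacter.LFunctionTrivChar,
    DirichletCharacter.LFunction, ZMod.LFunction] at h
  have h0 : (1 : DirichletCharacter ℂ 4) 0 = 0 := MulChar.map_nonunit _ (by decide)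
  have h1 : (1 : DirichletCharacter ℂ 4) 1 = 1 := MulChar.one_apply (by decide)
  have h2 : (1 : DirichletCharacter ℂ 4) 2 = 0 := MulChar.map_nonunit _ (by decide)
  have h3 : (1 : DirichletCharacter ℂ 4) 3 = 1 := MulChar.one_apply (by decide)
  have hsum : ∀ f : ZMod 4 → ℂ, ∑ j, f j = f 0 + f 1 + f 2 + f 3 := fun f => Fin.sum_univ_four f
  rw [hsum, h0, h1, h2, h3] at h
  have e1 : ZMod.toAddCircle (1 : ZMod 4) = ((1 / 4 : ℝ) : UnitAddCircle) := by
    have := ZMod.toAddCircle_natCast (N := 4) 1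
    simpa using this
  have e3 : ZMod.toAddCircle (3 : ZMod 4) = -((1 / 4 : ℝ) : UnitAddCircle) := by
    rw [← e1, ← map_neg]; rfl
  rw [e1, e3] at h
  rw [hurwitzZetaEven_eq]
  have h4 : (4 : ℂ) ^ s * (4 : ℂ) ^ (-s) = 1 := by
    rw [← Complex.cpow_add _ _ (by norm_num)]; simp
  push_cast at h
  linear_combination ((4 : ℂ) ^ s / 2) * h - (hurwitzZeta ((1 / 4 : ℝ) : UnitAddCircle) s
    + hurwitzZeta (-((1 / 4 : ℝ) : UnitAddCircle)) s) / 2 * h4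

open HurwitzZeta in
lemma sinZeta_quarter :
    sinZeta ((1 / 4 : ℝ) : UnitAddCircle) 2 = catalanConst := by
  have h := hasSum_nat_sinZeta (1 / 4) (s := 2) (by norm_num)
  have hodd : ∀ k : ℕ, ((Real.sin (2 * π * (1 / 4) * ((2 * k + 1 : ℕ) : ℝ)) : ℝ) : ℂ) /
      (((2 * k + 1 : ℕ) : ℂ)) ^ (2 : ℂ) = (((-1 : ℝ) ^ k / (2 * (k : ℝ) + 1) ^ 2 : ℝ) : ℂ) := by
    intro k
    have : Real.sin (2 * π * (1 / 4) * ((2 * k + 1 : ℕ) : ℝ)) = (-1) ^ k := by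
      rw [show 2 * π * (1 / 4) * ((2 * k + 1 : ℕ) : ℝ) = π / 2 + k * π by push_cast; ring,
        Real.sin_add_nat_mul_pi]
      simp
    rw [this, show (2 : ℂ) = ((2 : ℕ) : ℂ) by norm_num, Complex.cpow_natCast]
    push_cast; rfl
  have heven : ∀ k : ℕ, ((Real.sin (2 * π * (1 / 4) * ((2 * k : ℕ) : ℝ)) : ℝ) : ℂ) /
      (((2 * k : ℕ) : ℂ)) ^ (2 : ℂ) = 0 := by
    intro k
    have : Real.sin (2 * π * (1 / 4) * ((2 * k : ℕ) : ℝ)) = 0 := by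
      rw [show 2 * π * (1 / 4) * ((2 * k : ℕ) : ℝ) = k * π by push_cast; ring,
        Real.sin_nat_mul_pi]
    rw [this, Complex.ofReal_zero, zero_div]
  have hs := h.summable.comp_injective (i := fun k : ℕ => 2 * k + 1)
    (fun a b hab => by simpa using hab)
  simp only [Function.comp_def] at hs
  rw [summable_congr hodd] at hs
  have hs2 := hs.hasSum
  rw [← Complex.ofReal_tsum] at hs2
  have := HasSum.even_add_odd (m := 0) (m' := (catalanConst : ℂ))
    (f := fun n : ℕ ↦ ((Real.sin (2 * π * (1 / 4) * n) : ℝ) : ℂ) / (n : ℂ) ^ (2 : ℂ))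
    (by simp_rw [heven]; exact hasSum_zero) (by simp_rw [hodd]; exact hs2)
  rw [zero_add] at this
  exact h.unique this

open HurwitzZeta in
lemma deriv_odd_quarter :
    HasDerivAt (hurwitzZetaOdd ((1 / 4 : ℝ) : UnitAddCircle)) (catalanConst / (4 * π)) (-1) := by
  have hd := (differentiable_hurwitzZetaOdd ((1 / 4 : ℝ) : UnitAddCircle) (-1)).hasDerivAt
  -- derivative of `s ↦ odd (1 - s)` at 2
  have hpi : (π : ℂ) ≠ 0 := by exact_mod_cast Real.pi_ne_zero
  have h1 : HasDerivAt (fun s : ℂ => hurwitzZetaOdd ((1 / 4 : ℝ) : UnitAddCircle) (1 - s))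
      (-deriv (hurwitzZetaOdd ((1 / 4 : ℝ) : UnitAddCircle)) (-1)) 2 := by
    have e : (-1 : ℂ) = 1 - 2 := by norm_num
    rw [e] at hd ⊢
    exact hd.comp_const_sub 1 2
  have hA : DifferentiableAt ℂ (fun s : ℂ => 2 * (2 * (π : ℂ)) ^ (-s) * Complex.Gamma s) 2 := by
    have hG : DifferentiableAt ℂ Complex.Gamma 2 := by
      apply Complex.differentiableAt_Gamma
      intro m hm
      have := congrArg Complex.re hm
      simp at this
      have : (0 : ℝ) ≤ m := m.cast_nonneg
      linarith
    refine DifferentiableAt.mul ?_ hG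
    refine DifferentiableAt.const_mul ?_ _
    exact (differentiableAt_id.neg).const_cpow (Or.inl (by simp [hpi]))
  have hS : HasDerivAt (fun s : ℂ => Complex.sin (π * s / 2)) (-(π / 2)) 2 := by
    have h0 : HasDerivAt (fun s : ℂ => π * s / 2) ((π : ℂ) / 2) 2 := by
      simpa using ((hasDerivAt_id (2 : ℂ)).const_mul (π : ℂ)).div_const 2
    have := h0.csin
    rw [show (π : ℂ) * 2 / 2 = π by ring, Complex.cos_pi] at this
    convert this using 1
    ring
  have hZ := (differentiableAt_sinZeta ((1 / 4 : ℝ) : UnitAddCircle) 2).hasDerivAt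
  have h2 := (hA.hasDerivAt.mul hS).mul hZ
  have hev : (fun s : ℂ => hurwitzZetaOdd ((1 / 4 : ℝ) : UnitAddCircle) (1 - s)) =ᶠ[nhds 2]
      (((fun s : ℂ => 2 * (2 * (π : ℂ)) ^ (-s) * Complex.Gamma s) *
        (fun s : ℂ => Complex.sin (π * s / 2))) * sinZeta ((1 / 4 : ℝ) : UnitAddCircle)) := by
    have : {s : ℂ | 0 < s.re} ∈ nhds (2 : ℂ) :=
      (isOpen_lt continuous_const Complex.continuous_re).mem_nhds (by simp)
    filter_upwards [this] with s hs
    simp only [Pi.mul_apply]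
    apply hurwitzZetaOdd_one_sub
    intro n hn
    have hs' : 0 < s.re := hs
    rw [hn] at hs'
    simp at hs'
    have : (0 : ℝ) ≤ n := n.cast_nonneg
    linarith
  have h3 := h1.unique (h2.congr_of_eventuallyEq hev)
  rw [sinZeta_quarter] at h3
  simp only [Pi.mul_apply] at h3
  rw [show (π : ℂ) * 2 / 2 = π by ring, Complex.sin_pi] at h3
  have hG2 : Complex.Gamma 2 = 1 := by
    simp
  have hc : (2 * (π : ℂ)) ^ (-2 : ℂ) = ((2 * (π : ℂ)) ^ 2)⁻¹ := by
    rw [Complex.cpow_neg]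
    congr 1
    exact_mod_cast Complex.cpow_natCast (2 * (π : ℂ)) 2
  rw [hG2, hc] at h3
  have h4 : deriv (hurwitzZetaOdd ((1 / 4 : ℝ) : UnitAddCircle)) (-1) = catalanConst / (4 * π) := by
    rw [← neg_inj, h3]
    field_simp
    ring
  rw [h4] at hd
  exact hd

open HurwitzZeta in
lemma deriv_even_quarter :
    HasDerivAt (hurwitzZetaEven ((1 / 4 : ℝ) : UnitAddCircle)) (-deriv riemannZeta (-1) / 8)
      (-1) := by
  have hz := (differentiableAt_riemannZeta (s := -1) (by norm_num)).hasDerivAt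
  have h4 : HasDerivAt (fun s : ℂ => (4 : ℂ) ^ s) ((4 : ℂ) ^ (-1 : ℂ) * Complex.log 4 * 1) (-1) :=
    (hasDerivAt_id (-1 : ℂ)).const_cpow (Or.inl (by norm_num))
  have h2 : HasDerivAt (fun s : ℂ => (2 : ℂ) ^ (-s))
      ((2 : ℂ) ^ (-(-1) : ℂ) * Complex.log 2 * (-1)) (-1) :=
    (hasDerivAt_id (-1 : ℂ)).neg.const_cpow (Or.inl (by norm_num))
  have h := ((h4.mul (h2.const_sub 1)).div_const 2).mul hz
  have hev : hurwitzZetaEven ((1 / 4 : ℝ) : UnitAddCircle) =ᶠ[nhds (-1)]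
      (fun s => ((4 : ℂ) ^ s * (1 - (2 : ℂ) ^ (-s))) / 2 * riemannZeta s) := by
    filter_upwards [isOpen_ne.mem_nhds (show (-1 : ℂ) ≠ 1 by norm_num)] with s hs
    exact even_quarter hs
  have hl : Complex.log 4 = 2 * Complex.log 2 := by
    have : Real.log 4 = 2 * Real.log 2 := by
      rw [show (4 : ℝ) = 2 ^ 2 by norm_num, Real.log_pow]; norm_num
    have := congrArg (fun x : ℝ => (x : ℂ)) this
    simpa [Complex.ofReal_log] using this
  refine (h.congr_of_eventuallyEq hev).congr_deriv ?_
  simp only [Pi.mul_apply, hl, neg_neg, Complex.cpow_one, Complex.cpow_neg_one]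
  ring

/-- log G(1/4) = 3/32 − K/(4π) − (3/4) log Γ(1/4) − (9/8) log A. -/
theorem logBarnesG_one_quarter :
    logBarnesG (1 / 4) =
      3 / 32 - catalanConst / (4 * π) - (3 / 4) * Real.log (Real.Gamma (1 / 4))
        - (9 / 8) * logA := by
  have hc : ⌈(1 / 4 : ℝ)⌉₊ = 1 := by
    rw [Nat.ceil_eq_iff] <;> norm_num
  have hd : hurwitzZetaDerivNegOne (1 / 4) = -deriv riemannZeta (-1) / 8
      + catalanConst / (4 * π) := by
    have hf : (fun s => hurwitzZetaReal s (1 / 4)) =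
        fun s => HurwitzZeta.hurwitzZetaEven ((1 / 4 : ℝ) : UnitAddCircle) s
          + HurwitzZeta.hurwitzZetaOdd ((1 / 4 : ℝ) : UnitAddCircle) s := by
      funext s
      rw [hurwitzZetaReal, hc]
      simp only [Nat.sub_self, Finset.range_zero, Finset.sum_empty, sub_zero]
      rfl
    rw [hurwitzZetaDerivNegOne, hf]
    exact (deriv_even_quarter.add deriv_odd_quarter).deriv
  rw [logBarnesG, if_pos (by norm_num), logBarnesG1p, hd, logA]
  push_cast
  ring
end

section
/- The Barnes G-function satisfies log G(3/4) = log G(1/4) + K/(2π) − (log 2)/8 − (log π)/4 + log Γ(1/4), where K is Catalan's constant. -/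
open Real MeasureTheory Filter

lemma aux_sum : HurwitzZeta.sinZeta ((1/4 : ℝ) : UnitAddCircle) 2 = (catalanConst : ℂ) := by
  have h := HurwitzZeta.hasSum_nat_sinZeta (1/4) (s := 2) (by norm_num)
  have hodd : Function.support (fun n : ℕ ↦ ((Real.sin (2 * π * (1/4) * n) : ℝ) : ℂ) / (n : ℂ) ^ (2:ℂ))
      ⊆ Set.range (fun k : ℕ => 2 * k + 1) := by
    intro n hn
    by_contra hne
    apply hn
    rcases Nat.even_or_odd' n with ⟨k, rfl | rfl⟩
    · have : Real.sin (2 * π * (1/4) * ((2 * k : ℕ) : ℝ)) = 0 := by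
        rw [← Real.sin_nat_mul_pi k]; congr 1; push_cast; ring
      simp only [this]; simp
    · exact absurd ⟨k, rfl⟩ hne
  have hinj : Function.Injective (fun k : ℕ => 2 * k + 1) := by
    intro a b hab; simpa using hab
  rw [← hinj.hasSum_iff (by
    intro x hx; by_contra h0; exact hx (hodd h0))] at h
  rw [← h.tsum_eq, catalanConst, Complex.ofReal_tsum]
  refine tsum_congr fun k => ?_
  have : Real.sin (2 * π * (1/4) * ((2 * k + 1 : ℕ) : ℝ)) = (-1) ^ k := by
    have : 2 * π * (1/4) * ((2 * k + 1 : ℕ) : ℝ) = π / 2 + k * π := by push_cast; ring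
    rw [this, Real.sin_add_nat_mul_pi, Real.sin_pi_div_two, mul_one]
  simp only [Function.comp, this]
  push_cast
  norm_cast

lemma aux_deriv : HasDerivAt (HurwitzZeta.hurwitzZetaOdd ((1/4 : ℝ) : UnitAddCircle))
    ((catalanConst : ℂ) / (4 * π)) (-1) := by
  have hpi : (π : ℂ) ≠ 0 := by exact_mod_cast Real.pi_ne_zero
  set a : UnitAddCircle := ((1/4 : ℝ) : UnitAddCircle) with ha
  have hg : DifferentiableAt ℂ (fun s : ℂ => 2 * (2 * (π:ℂ)) ^ (-s) * Complex.Gamma s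
      * HurwitzZeta.sinZeta a s) 2 := by
    refine DifferentiableAt.mul (DifferentiableAt.mul (DifferentiableAt.const_mul ?_ _) ?_) ?_
    · exact DifferentiableAt.const_cpow (by fun_prop) (Or.inl (by simp [hpi]))
    · refine Complex.differentiableAt_Gamma _ fun m h => ?_
      have := congrArg Complex.re h
      simp at this
      linarith [(Nat.cast_nonneg m : (0:ℝ) ≤ m)]
    · exact HurwitzZeta.differentiableAt_sinZeta a 2
  have hs : HasDerivAt (fun s : ℂ => Complex.sin (π * s / 2)) (Complex.cos (π * 2 / 2) * (π / 2)) 2 := by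
    refine HasDerivAt.csin ?_
    simpa using ((hasDerivAt_id (2:ℂ)).const_mul (π:ℂ)).div_const 2
  have hm := hg.hasDerivAt.mul hs
  have hc := HasDerivAt.scomp (𝕜 := ℂ) (-1 : ℂ) (h := fun w => 1 - w) (h' := -1) (by
    rw [show (1 - (-1) : ℂ) = 2 by norm_num]; exact hm) (by
    simpa using (hasDerivAt_id (-1:ℂ)).const_sub 1)
  have hE : HurwitzZeta.hurwitzZetaOdd a =ᶠ[nhds (-1)]
      (((fun s : ℂ => 2 * (2 * (π:ℂ)) ^ (-s) * Complex.Gamma s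
      * HurwitzZeta.sinZeta a s) * (fun s : ℂ => Complex.sin (π * s / 2))) ∘ fun w => 1 - w) := by
    have : ∀ᶠ w : ℂ in nhds (-1), w.re < 0 :=
      (Complex.continuous_re.tendsto (-1)).eventually (gt_mem_nhds (by simp))
    filter_upwards [this] with w hw
    have := HurwitzZeta.hurwitzZetaOdd_one_sub a (s := 1 - w) (fun n h => by
      have := congrArg Complex.re h
      simp at this
      linarith [(Nat.cast_nonneg n : (0:ℝ) ≤ n)])
    rw [sub_sub_cancel] at this
    rw [this]; simp only [Function.comp, Pi.mul_apply]; ring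
  refine (hc.congr_of_eventuallyEq hE).congr_deriv ?_
  have h2 : (2 * (π:ℂ)) ^ (-2 : ℂ) = 1 / (2 * π) ^ 2 := by
    rw [Complex.cpow_neg]; norm_cast; simp
  have h3 : (π : ℂ) * 2 / 2 = π := by ring
  have h4 : Complex.Gamma 2 = 1 := by
    have := Complex.Gamma_nat_eq_factorial 1
    rw [← one_add_one_eq_two]; simpa using this
  simp only [h3, Complex.sin_pi, Complex.cos_pi, h2, h4]
  rw [ha, aux_sum]
  simp
  field_simp
  ring

lemma aux_diff : hurwitzZetaDerivNegOne (1/4) - hurwitzZetaDerivNegOne (3/4)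
    = (catalanConst : ℂ) / (2 * π) := by
  have hpi : (π : ℂ) ≠ 0 := by exact_mod_cast Real.pi_ne_zero
  have c1 : ⌈(1/4 : ℝ)⌉₊ = 1 := by rw [Nat.ceil_eq_iff] <;> norm_num
  have c3 : ⌈(3/4 : ℝ)⌉₊ = 1 := by rw [Nat.ceil_eq_iff] <;> norm_num
  have hneg : ((3/4 : ℝ) : UnitAddCircle) = -((1/4 : ℝ) : UnitAddCircle) := by
    rw [eq_neg_iff_add_eq_zero, ← AddCircle.coe_add]
    norm_num
  unfold hurwitzZetaDerivNegOne hurwitzZetaReal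
  simp only [c1, c3, Nat.sub_self, Finset.range_zero, Finset.sum_empty, sub_zero]
  have d : ∀ a, DifferentiableAt ℂ (fun s => HurwitzZeta.hurwitzZeta a s) (-1) := fun a =>
    HurwitzZeta.differentiableAt_hurwitzZeta a (by norm_num)
  rw [← deriv_fun_sub (d _) (d _), hneg]
  have : (fun s => HurwitzZeta.hurwitzZeta ((1/4 : ℝ) : UnitAddCircle) s
      - HurwitzZeta.hurwitzZeta (-((1/4 : ℝ) : UnitAddCircle)) s)
      = fun s => 2 * HurwitzZeta.hurwitzZetaOdd ((1/4 : ℝ) : UnitAddCircle) s := by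
    ext s; rw [HurwitzZeta.hurwitzZetaOdd_eq]; ring
  rw [this, (aux_deriv.const_mul 2).deriv]
  field_simp
  ring

lemma aux_gamma : Real.log (Real.Gamma (3/4)) =
    Real.log π + Real.log 2 / 2 - Real.log (Real.Gamma (1/4)) := by
  have h := Real.Gamma_mul_Gamma_one_sub (1/4)
  rw [show (1 - 1/4 : ℝ) = 3/4 by norm_num, show π * (1/4) = π / 4 by ring,
    Real.sin_pi_div_four] at h
  have p1 : Real.Gamma (1/4) ≠ 0 := (Real.Gamma_pos_of_pos (by norm_num)).ne'
  have p3 : Real.Gamma (3/4) ≠ 0 := (Real.Gamma_pos_of_pos (by norm_num)).ne'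
  have h' := congrArg Real.log h
  rw [Real.log_mul p1 p3, Real.log_div Real.pi_ne_zero (by positivity),
    Real.log_div (by positivity) (by norm_num), Real.log_sqrt (by norm_num)] at h'
  linarith


/-- log G(3/4) = log G(1/4) + K/(2π) − (log 2)/8 − (log π)/4 + log Γ(1/4). -/
theorem logBarnesG_three_quarters :
    logBarnesG (3 / 4) =
      logBarnesG (1 / 4) + catalanConst / (2 * π) - (Real.log 2) / 8 - (Real.log π) / 4
        + Real.log (Real.Gamma (1 / 4)) := by
  have h := aux_diff
  have hg : ((Real.log (Real.Gamma (3/4)) : ℝ) : ℂ) =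
      Real.log π + Real.log 2 / 2 - Real.log (Real.Gamma (1/4)) := by
    rw [aux_gamma]; push_cast; ring
  unfold logBarnesG logBarnesG1p
  rw [if_pos (by norm_num), if_pos (by norm_num), hg]
  push_cast
  linear_combination h
end

section
/- The Barnes G-function satisfies log G(1/3) = 1/9 + (log 3)/72 + π/(18√3) − (2/3)·log Γ(1/3) − (4/3)·log A − ψ⁽¹⁾(1/3)/(12√3·π), where ψ⁽¹⁾ is the trigamma function. -/
open Real MeasureTheory Filter

lemma aux_hasSum_logGamma {x : ℝ} (hx : 0 < x)
    (hs : Summable fun N : ℕ => x * (Real.log (N + 1) - Real.log N) + Real.log (N + 1)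
      - Real.log (x + (N + 1))) :
    Real.log (Real.Gamma x) = - Real.log x + ∑' N : ℕ, (x * (Real.log (N + 1) - Real.log N)
      + Real.log (N + 1) - Real.log (x + (N + 1))) := by
  have h1 := hs.hasSum.tendsto_sum_nat
  have h2 := (Real.BohrMollerup.tendsto_log_gamma hx).add_const (Real.log x)
  have h3 : ∀ M : ℕ, ∑ N ∈ Finset.range M, (x * (Real.log (N + 1) - Real.log N)
      + Real.log (N + 1) - Real.log (x + (N + 1))) =
      Real.BohrMollerup.logGammaSeq x M + Real.log x := by
    intro M
    induction M with
    | zero => simp [Real.BohrMollerup.logGammaSeq]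
    | succ M ih =>
      rw [Finset.sum_range_succ, ih]
      unfold Real.BohrMollerup.logGammaSeq
      rw [Finset.sum_range_succ _ (M + 1), Nat.factorial_succ]
      push_cast
      rw [Real.log_mul (by positivity) (by positivity)]
      ring
  simp_rw [h3] at h1
  linarith [tendsto_nhds_unique h1 h2]

lemma aux_bound1 (N : ℕ) (y : ℝ) (h1 : -1/2 < y) (h2 : y < 2) :
    ‖Real.log (N + 1) - Real.log N - 1 / (y + (N + 1))‖ ≤ 3 / ((N : ℝ) + 1) ^ 2 := by
  rcases Nat.eq_zero_or_pos N with rfl | hN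
  · simp only [Nat.cast_zero, zero_add, Real.log_one, Real.log_zero, sub_zero]
    rw [zero_sub, norm_neg, Real.norm_of_nonneg (by apply div_nonneg <;> linarith),
      div_le_div_iff₀ (by linarith) (by norm_num)]
    linarith
  have hN' : (1 : ℝ) ≤ N := by exact_mod_cast hN
  have hN0 : (0 : ℝ) < N := by linarith
  have e : Real.log (N + 1) - Real.log N = Real.log ((N + 1) / N) := by
    rw [Real.log_div (by positivity) (by positivity)]
  have u1 : Real.log ((N + 1) / N : ℝ) ≤ 1 / N := by
    have := Real.log_le_sub_one_of_pos (x := ((N + 1) / N : ℝ)) (by positivity)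
    have e2 : ((N + 1) / N : ℝ) - 1 = 1 / N := by field_simp; ring
    linarith
  have u2 : 1 / (N + 1 : ℝ) ≤ Real.log ((N + 1) / N : ℝ) := by
    have := Real.one_sub_inv_le_log_of_pos (x := ((N + 1) / N : ℝ)) (by positivity)
    have e2 : 1 - ((N + 1) / N : ℝ)⁻¹ = 1 / (N + 1) := by field_simp; ring
    linarith
  have v1 : 1 / (y + (N + 1)) ≤ 1 / (N + 1 / 2 : ℝ) :=
    one_div_le_one_div_of_le (by positivity) (by linarith)
  have v2 : 1 / (N + 3 : ℝ) ≤ 1 / (y + (N + 1)) :=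
    one_div_le_one_div_of_le (by linarith) (by linarith)
  have w1 : 1 / (N : ℝ) - 1 / (N + 3 : ℝ) ≤ 3 / ((N : ℝ) + 1) ^ 2 := by
    rw [div_sub_div _ _ (by positivity) (by positivity), div_le_div_iff₀ (by positivity) (by positivity)]
    nlinarith
  have w2 : -(3 / ((N : ℝ) + 1) ^ 2) ≤ 1 / (N + 1 : ℝ) - 1 / (N + 1 / 2 : ℝ) := by
    rw [neg_le_sub_iff_le_add, div_add_div _ _ (by positivity) (by positivity),
      div_le_div_iff₀ (by positivity) (by positivity)]
    nlinarith [pow_pos hN0 2, pow_pos hN0 3]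
  rw [e, Real.norm_eq_abs, abs_le]
  constructor <;> linarith

lemma aux_summable (c : ℝ) : Summable fun N : ℕ => c / ((N : ℝ) + 1) ^ 2 := by
  have := (summable_nat_add_iff 1).2 (Real.summable_one_div_nat_pow.2 (one_lt_two))
  simpa [div_eq_mul_inv] using this.mul_left c

lemma aux_bound2 (N : ℕ) (y : ℝ) (h1 : -1/2 < y) :
    ‖1 / (y + ((N : ℝ) + 1)) ^ 2‖ ≤ 4 / ((N : ℝ) + 1) ^ 2 := by
  have hN0 : (0 : ℝ) ≤ N := by positivity
  have : 0 < y + ((N : ℝ) + 1) := by linarith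
  rw [Real.norm_of_nonneg (by positivity), div_le_div_iff₀ (by positivity) (by positivity)]
  nlinarith

noncomputable def auxG (N : ℕ) (x : ℝ) : ℝ :=
  x * (Real.log (N + 1) - Real.log N) + Real.log (N + 1) - Real.log (x + (N + 1))

noncomputable def auxG1 (N : ℕ) (y : ℝ) : ℝ :=
  Real.log (N + 1) - Real.log N - 1 / (y + (N + 1))

noncomputable def auxG2 (N : ℕ) (y : ℝ) : ℝ := 1 / (y + ((N : ℝ) + 1)) ^ 2

lemma aux_pos (N : ℕ) (y : ℝ) (hy : y ∈ Set.Ioo (-1/2 : ℝ) 2) : 0 < y + ((N : ℝ) + 1) := by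
  have hN0 : (0 : ℝ) ≤ N := by positivity
  have := hy.1
  linarith

lemma aux_d1 (N : ℕ) (y : ℝ) (hy : y ∈ Set.Ioo (-1/2 : ℝ) 2) :
    HasDerivAt (auxG N) (auxG1 N y) y := by
  have := (((hasDerivAt_id y).mul_const (Real.log (N + 1) - Real.log N)).add_const
      (Real.log (N + 1))).sub (((hasDerivAt_id y).add_const ((N : ℝ) + 1)).log (aux_pos N y hy).ne')
  rw [one_mul] at this
  exact this

lemma aux_d2 (N : ℕ) (y : ℝ) (hy : y ∈ Set.Ioo (-1/2 : ℝ) 2) :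
    HasDerivAt (auxG1 N) (auxG2 N y) y := by
  have := (((hasDerivAt_id y).add_const ((N : ℝ) + 1)).inv (aux_pos N y hy).ne').const_sub
      (Real.log (N + 1) - Real.log N)
  rw [neg_div, neg_neg] at this
  have e : auxG1 N = fun y => Real.log (N + 1) - Real.log N - (y + ((N : ℝ) + 1))⁻¹ := by
    ext; simp [auxG1]
  rw [e]
  exact this

lemma aux_trigamma {x : ℝ} (hx : 0 < x) (hx2 : x < 2) :
    trigamma x = 1 / x ^ 2 + ∑' N : ℕ, 1 / (x + ((N : ℝ) + 1)) ^ 2 := by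
  have b1 : ∀ (N : ℕ) (y : ℝ), y ∈ Set.Ioo (-1/2 : ℝ) 2 → ‖auxG1 N y‖ ≤ 3 / ((N : ℝ) + 1) ^ 2 :=
    fun N y hy => aux_bound1 N y hy.1 hy.2
  have b2 : ∀ (N : ℕ) (y : ℝ), y ∈ Set.Ioo (-1/2 : ℝ) 2 → ‖auxG2 N y‖ ≤ 4 / ((N : ℝ) + 1) ^ 2 :=
    fun N y hy => aux_bound2 N y hy.1
  have o : IsOpen (Set.Ioo (-1/2 : ℝ) 2) := isOpen_Ioo
  have pc : IsPreconnected (Set.Ioo (-1/2 : ℝ) 2) := isPreconnected_Ioo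
  have z : (0 : ℝ) ∈ Set.Ioo (-1/2 : ℝ) 2 := by constructor <;> norm_num
  have s0 : Summable fun N : ℕ => auxG N 0 := by simp [auxG, summable_zero]
  have sub : ∀ y : ℝ, y ∈ Set.Ioo (0 : ℝ) 2 → y ∈ Set.Ioo (-1/2 : ℝ) 2 :=
    fun y hy => ⟨by linarith [hy.1], hy.2⟩
  have D1 : ∀ y ∈ Set.Ioo (0 : ℝ) 2, HasDerivAt (fun t => Real.log (Real.Gamma t))
      (- y⁻¹ + ∑' N : ℕ, auxG1 N y) y := by
    intro y hy
    have h1 := (Real.hasDerivAt_log hy.1.ne').neg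
    have h2 := hasDerivAt_tsum_of_isPreconnected (aux_summable 3) o pc aux_d1 b1 z s0 (sub y hy)
    refine (h1.add h2).congr_of_eventuallyEq ?_
    filter_upwards [isOpen_Ioo.mem_nhds hy] with w hw
    have hsum : Summable (fun N => auxG N w) :=
      summable_of_summable_hasDerivAt_of_isPreconnected (g := auxG) (g' := auxG1)
      (aux_summable 3) o pc aux_d1 b1 z s0 (sub w hw)
    exact aux_hasSum_logGamma hw.1 hsum
  have hxm : x ∈ Set.Ioo (0 : ℝ) 2 := ⟨hx, hx2⟩
  have h1 := (hasDerivAt_inv hx.ne').neg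
  have h2 := hasDerivAt_tsum_of_isPreconnected (aux_summable 4) o pc aux_d2 b2 (sub x hxm)
        (Summable.of_norm_bounded (aux_summable 3) (fun N => b1 N x (sub x hxm)))
        (sub x hxm)
  unfold trigamma
  have := (h1.add h2).congr_of_eventuallyEq (f₁ := deriv (fun t => Real.log (Real.Gamma t))) (by
    filter_upwards [isOpen_Ioo.mem_nhds hxm] with w hw
    exact (D1 w hw).deriv)
  rw [this.deriv]
  simp [auxG2]

lemma aux_trigamma_hz :
    HurwitzZeta.hurwitzZeta ((1 / 3 : ℝ) : UnitAddCircle) 2 = (trigamma (1 / 3) : ℂ) := by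
  have h := HurwitzZeta.hasSum_hurwitzZeta_of_one_lt_re (a := 1 / 3) (by constructor <;> norm_num)
    (s := 2) (by norm_num)
  have h2 : HasSum (fun n : ℕ => 1 / ((n : ℝ) + 1 / 3) ^ 2) (trigamma (1 / 3)) := by
    rw [aux_trigamma (by norm_num) (by norm_num), ← hasSum_nat_add_iff' 1]
    have : Summable fun N : ℕ => 1 / ((1 / 3 : ℝ) + ((N : ℝ) + 1)) ^ 2 :=
      Summable.of_norm_bounded (aux_summable 4) (fun N => aux_bound2 N _ (by norm_num))
    have e1 : (fun n : ℕ => 1 / (((n + 1 : ℕ) : ℝ) + 1 / 3) ^ 2) =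
        fun N : ℕ => 1 / ((1 / 3 : ℝ) + ((N : ℝ) + 1)) ^ 2 := by
      ext n
      rw [show ((n + 1 : ℕ) : ℝ) + 1 / 3 = 1 / 3 + ((n : ℝ) + 1) by push_cast; ring]
    rw [e1, Finset.sum_range_one]
    have e2 := this.hasSum
    simpa using e2
  refine h.unique ?_
  have h3 := Complex.hasSum_ofReal.2 h2
  convert h3 using 2 with n
  push_cast
  norm_cast

lemma aux_circle : ((2 / 3 : ℝ) : UnitAddCircle) = -((1 / 3 : ℝ) : UnitAddCircle) := by
  rw [eq_neg_iff_add_eq_zero, ← AddCircle.coe_add]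
  norm_num

lemma aux_LF (Φ : ZMod 3 → ℂ) (h0 : Φ 0 = 0) (s : ℂ) : ZMod.LFunction Φ s =
    3 ^ (-s) * (Φ 1 * HurwitzZeta.hurwitzZeta ((1 / 3 : ℝ) : UnitAddCircle) s
      + Φ 2 * HurwitzZeta.hurwitzZeta ((2 / 3 : ℝ) : UnitAddCircle) s) := by
  unfold ZMod.LFunction
  have : ∀ f : ZMod 3 → ℂ, ∑ j, f j = f 0 + f 1 + f 2 := fun f => Fin.sum_univ_three f
  rw [this, h0]
  have e1 : ZMod.toAddCircle (1 : ZMod 3) = ((1 / 3 : ℝ) : UnitAddCircle) := by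
    have := ZMod.toAddCircle_intCast (N := 3) 1
    simpa using this
  have e2 : ZMod.toAddCircle (2 : ZMod 3) = ((2 / 3 : ℝ) : UnitAddCircle) := by
    have := ZMod.toAddCircle_intCast (N := 3) 2
    simpa using this
  rw [e1, e2]
  simp

lemma aux_hz (s : ℂ) : HurwitzZeta.hurwitzZeta ((2 / 3 : ℝ) : UnitAddCircle) s =
    HurwitzZeta.hurwitzZetaEven ((1 / 3 : ℝ) : UnitAddCircle) s -
    HurwitzZeta.hurwitzZetaOdd ((1 / 3 : ℝ) : UnitAddCircle) s := by
  rw [aux_circle, HurwitzZeta.hurwitzZeta, HurwitzZeta.hurwitzZetaEven_neg,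
    HurwitzZeta.hurwitzZetaOdd_neg]
  ring

lemma aux_even {s : ℂ} (hs : s ≠ 1) : HurwitzZeta.hurwitzZetaEven ((1 / 3 : ℝ) : UnitAddCircle) s =
    (3 ^ s - 1) * riemannZeta s / 2 := by
  have h := DirichletCharacter.LFunctionTrivChar_eq_mul_riemannZeta (N := 3) hs
  unfold DirichletCharacter.LFunctionTrivChar DirichletCharacter.LFunction at h
  have t0 : (1 : DirichletCharacter ℂ 3) 0 = 0 := MulChar.map_nonunit _ (by decide)
  have t1 : (1 : DirichletCharacter ℂ 3) 1 = 1 := MulChar.one_apply (by decide)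
  have t2 : (1 : DirichletCharacter ℂ 3) 2 = 1 := MulChar.one_apply (by decide)
  rw [aux_LF _ t0, t1, t2, aux_hz, Nat.Prime.primeFactors Nat.prime_three, HurwitzZeta.hurwitzZeta] at h
  simp only [Finset.prod_singleton, Nat.cast_ofNat, Complex.cpow_neg] at h
  have : (3 : ℂ) ^ s ≠ 0 := by simp [Complex.cpow_eq_zero_iff]
  field_simp at h
  linear_combination h / 2

lemma aux_sin (n : ℕ) : ((Real.sin (2 * π * (1 / 3) * n) : ℝ) : ℂ) =
    (![0, (Real.sqrt 3 / 2 : ℂ), -(Real.sqrt 3 / 2 : ℂ)] : ZMod 3 → ℂ) (n : ZMod 3) := by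
  have s1 : Real.sin (2 * π * (1 / 3)) = Real.sqrt 3 / 2 := by
    rw [← Real.sin_pi_div_three, ← Real.sin_pi_sub]; congr 1; ring
  have s2 : Real.sin (2 * (2 * π * (1 / 3))) = -(Real.sqrt 3 / 2) := by
    rw [← Real.sin_pi_div_three, ← Real.sin_add_pi]; congr 1; ring
  obtain ⟨k, r, hr, rfl⟩ : ∃ k r : ℕ, r < 3 ∧ n = r + 3 * k := ⟨n / 3, n % 3, Nat.mod_lt _ (by norm_num), by omega⟩
  have e : 2 * π * (1 / 3) * ((r + 3 * k : ℕ) : ℝ) = r * (2 * π * (1 / 3)) + k * (2 * π) := by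
    push_cast; ring
  rw [e, Real.sin_add_nat_mul_two_pi]
  have e3 : ((r + 3 * k : ℕ) : ZMod 3) = r := by
    push_cast
    rw [show (3 : ZMod 3) = 0 from rfl]; ring
  rw [e3]
  interval_cases r
  · simp
  · simp only [Nat.cast_one, one_mul, s1]
    push_cast
    rfl
  · simp only [Nat.cast_ofNat, s2]
    push_cast
    rfl

lemma aux_sinZeta : HurwitzZeta.sinZeta ((1 / 3 : ℝ) : UnitAddCircle) 2 =
    Real.sqrt 3 / 9 * HurwitzZeta.hurwitzZetaOdd ((1 / 3 : ℝ) : UnitAddCircle) 2 := by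
  have h := HurwitzZeta.hasSum_nat_sinZeta (1 / 3) (s := 2) (by norm_num)
  set Φ : ZMod 3 → ℂ := ![0, (Real.sqrt 3 / 2 : ℂ), -(Real.sqrt 3 / 2 : ℂ)] with hΦ
  have h2 := ZMod.LFunction_eq_LSeries Φ (s := 2) (by norm_num)
  have h0 : Φ 0 = 0 := rfl
  have h1 : Φ 1 = (Real.sqrt 3 / 2 : ℂ) := rfl
  have h2' : Φ 2 = -(Real.sqrt 3 / 2 : ℂ) := rfl
  rw [aux_LF Φ h0, h1, h2', aux_hz, HurwitzZeta.hurwitzZeta] at h2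
  rw [← h.tsum_eq]
  have : (3 : ℂ) ^ (-2 : ℂ) = 1 / 9 := by
    rw [Complex.cpow_neg, Complex.cpow_ofNat]; norm_num
  rw [this] at h2
  trans LSeries (fun n => Φ n) 2
  · unfold LSeries
    congr 1
    ext n
    rcases eq_or_ne n 0 with rfl | hn
    · simp
    · rw [LSeries.term_of_ne_zero hn, aux_sin]
  · rw [← h2]; ring

lemma aux_odd_deriv (a : UnitAddCircle) : HasDerivAt (HurwitzZeta.hurwitzZetaOdd a)
    (HurwitzZeta.sinZeta a 2 / (4 * π)) (-1) := by
  have hpi : (π : ℂ) ≠ 0 := by exact_mod_cast Real.pi_ne_zero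
  have hn : ∀ s : ℂ, 0 < s.re → ∀ n : ℕ, s ≠ -n := by
    rintro s hs n rfl
    simp at hs
    have : (0 : ℝ) ≤ n := by positivity
    linarith
  have hu : DifferentiableAt ℂ (fun s : ℂ => 2 * (2 * π : ℂ) ^ (-s) * Complex.Gamma s
      * HurwitzZeta.sinZeta a s) 2 := by
    refine DifferentiableAt.mul (DifferentiableAt.mul (DifferentiableAt.const_mul ?_ _) ?_) ?_
    · exact differentiableAt_id.neg.const_cpow (Or.inl (by simp [hpi]))
    · exact Complex.differentiableAt_Gamma _ (hn 2 (by norm_num))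
    · exact HurwitzZeta.differentiableAt_sinZeta a 2
  have hv : HasDerivAt (fun s : ℂ => Complex.sin (π * s / 2)) (- π / 2 : ℂ) 2 := by
    have := (((hasDerivAt_id (2 : ℂ)).const_mul (π : ℂ)).div_const 2).csin
    refine this.congr_deriv ?_
    simp [neg_div]
  have hm := hu.hasDerivAt.mul hv
  have hc : HasDerivAt (fun s : ℂ => 1 - s) (-1) (-1 : ℂ) := (hasDerivAt_id _).const_sub 1
  have e2 : (2 : ℂ) = 1 - (-1) := by norm_num
  rw [e2] at hm
  have hf := hm.comp (-1 : ℂ) hc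
  rw [← e2] at hf
  refine (hf.congr_of_eventuallyEq ?_).congr_deriv ?_
  · have : ∀ᶠ s : ℂ in nhds (-1), s.re < 0 :=
      (isOpen_lt Complex.continuous_re continuous_const).mem_nhds (by simp)
    filter_upwards [this] with s hs
    have := HurwitzZeta.hurwitzZetaOdd_one_sub a (s := 1 - s) (hn _ (by simp; linarith))
    rw [sub_sub_cancel] at this
    rw [this]
    simp only [Function.comp, Pi.mul_apply]
    ring
  · have e3 : Complex.sin (π * 2 / 2) = 0 := by simp
    have e4 : (2 * π : ℂ) ^ (-2 : ℂ) = 1 / (4 * π ^ 2) := by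
      rw [Complex.cpow_neg, Complex.cpow_ofNat]; field_simp; norm_num
    have e5 : Complex.Gamma 2 = 1 := by
      simpa using Complex.Gamma_nat_eq_factorial 1
    rw [e3, e4, e5]
    field_simp
    ring

lemma aux_even_deriv : HasDerivAt (HurwitzZeta.hurwitzZetaEven ((1 / 3 : ℝ) : UnitAddCircle))
    (- Real.log 3 / 72 - deriv riemannZeta (-1) / 3) (-1) := by
  have h1 : HasDerivAt (fun s : ℂ => (3 : ℂ) ^ s - 1) ((3 : ℂ) ^ (-1 : ℂ) * Complex.log 3) (-1) := by
    have := ((hasDerivAt_id (-1 : ℂ)).const_cpow (c := (3 : ℂ)) (Or.inl (by norm_num))).sub_const 1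
    simpa using this
  have h2 : HasDerivAt riemannZeta (deriv riemannZeta (-1)) (-1) :=
    (differentiableAt_riemannZeta (by norm_num)).hasDerivAt
  have h3 := (h1.mul h2).div_const 2
  refine (h3.congr_of_eventuallyEq ?_).congr_deriv ?_
  · filter_upwards [isOpen_ne.mem_nhds (show (-1 : ℂ) ≠ 1 by norm_num)] with s hs
    exact aux_even hs
  · have z : riemannZeta (-1) = -1 / 12 := by
      have := riemannZeta_neg_nat_eq_bernoulli 1
      simp [bernoulli_two, bernoulli] at this
      rw [this]; norm_num
    have l : Complex.log 3 = (Real.log 3 : ℂ) := by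
      rw [Complex.ofReal_log (by norm_num)]; norm_num
    rw [z, l, Complex.cpow_neg_one]
    ring

/-- log G(1/3) in terms of Γ(1/3), A and the trigamma function. -/
theorem logBarnesG_one_third :
    logBarnesG (1 / 3) =
      1 / 9 + (Real.log 3) / 72 + π / (18 * Real.sqrt 3)
        - (2 / 3) * Real.log (Real.Gamma (1 / 3)) - (4 / 3) * logA
        - trigamma (1 / 3) / (12 * Real.sqrt 3 * π) := by
  have c : ⌈(1 / 3 : ℝ)⌉₊ = 1 := by
    rw [Nat.ceil_eq_iff (by norm_num)]; norm_num
  have hd : hurwitzZetaDerivNegOne (1 / 3) = (- Real.log 3 / 72 - deriv riemannZeta (-1) / 3) +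
      HurwitzZeta.sinZeta ((1 / 3 : ℝ) : UnitAddCircle) 2 / (4 * π) := by
    unfold hurwitzZetaDerivNegOne hurwitzZetaReal
    simp only [c, Nat.sub_self, Finset.range_zero, Finset.sum_empty, sub_zero]
    exact (aux_even_deriv.add (aux_odd_deriv _)).deriv
  have ho : HurwitzZeta.hurwitzZetaOdd ((1 / 3 : ℝ) : UnitAddCircle) 2 =
      trigamma (1 / 3) - 2 * π ^ 2 / 3 := by
    have h1 := aux_trigamma_hz
    rw [HurwitzZeta.hurwitzZeta, aux_even (by norm_num), riemannZeta_two, Complex.cpow_ofNat] at h1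
    linear_combination h1
  have hpi : (π : ℂ) ≠ 0 := by exact_mod_cast Real.pi_ne_zero
  have h3 : (Real.sqrt 3 : ℂ) ≠ 0 := by
    exact_mod_cast (Real.sqrt_pos.2 (by norm_num : (0 : ℝ) < 3)).ne'
  have h33 : (Real.sqrt 3 : ℂ) ^ 2 = 3 := by
    exact_mod_cast Real.sq_sqrt (by norm_num : (0 : ℝ) ≤ 3)
  have i3 : (Real.sqrt 3 : ℂ) = 3 / Real.sqrt 3 := by
    field_simp; exact h33
  rw [logBarnesG, if_pos (by norm_num), logBarnesG1p, hd, aux_sinZeta, ho, logA, i3]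
  push_cast
  field_simp
  linear_combination (-(31104 * (π : ℂ) ^ 2 - 46656 * trigamma (1 / 3))) * h33
end

section
/- For every real z with 0 < z < 1, the Barnes G-function satisfies the reflexion formula log( G(1+z)/G(1−z) ) = −z·log( sin(πz)/π ) − Cl₂(2πz)/(2π), where Cl₂ is the Clausen function. -/
open Real MeasureTheory Filter

open HurwitzZeta

lemma odd_deriv_aux (a : UnitAddCircle) :
    HasDerivAt (hurwitzZetaOdd a) (sinZeta a 2 / (4 * π)) (-1) := by
  have hd := ((differentiable_hurwitzZetaOdd a) (-1)).hasDerivAt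
  have h1 : HasDerivAt (fun s : ℂ => hurwitzZetaOdd a (1 - s))
      (deriv (hurwitzZetaOdd a) (-1) * (-1)) 2 := by
    have h : HasDerivAt (fun s : ℂ => 1 - s) (-1) 2 := by
      simpa using (hasDerivAt_id (2:ℂ)).const_sub 1
    refine HasDerivAt.comp (2:ℂ) (h₂ := hurwitzZetaOdd a) ?_ h
    have e : (1 - 2 : ℂ) = -1 := by norm_num
    rw [e]; exact hd
  have hpi : (π : ℂ) ≠ 0 := by exact_mod_cast Real.pi_ne_zero
  have hG : DifferentiableAt ℂ (fun s : ℂ => 2 * (2 * (π:ℂ)) ^ (-s) * Complex.Gamma s * sinZeta a s) 2 := by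
    refine DifferentiableAt.mul (DifferentiableAt.mul (DifferentiableAt.const_mul ?_ _) ?_) ?_
    · exact (differentiableAt_id.neg).const_cpow (Or.inl (by simp [hpi]))
    · apply Complex.differentiableAt_Gamma
      intro m h
      have := congrArg Complex.re h
      simp at this
      have : (0:ℝ) ≤ m := Nat.cast_nonneg m
      linarith
    · exact differentiableAt_sinZeta a 2
  have hS : HasDerivAt (fun s : ℂ => Complex.sin (π * s / 2)) (-(π / 2)) 2 := by
    have h : HasDerivAt (fun s : ℂ => π * s / 2) ((π:ℂ) / 2) 2 := by
      simpa using ((hasDerivAt_id (2:ℂ)).const_mul (π:ℂ)).div_const 2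
    have := h.csin
    simpa using this
  have h2 := hG.hasDerivAt.mul hS
  have heq : (fun s : ℂ => hurwitzZetaOdd a (1 - s)) =ᶠ[nhds 2]
      ((fun s : ℂ => 2 * (2 * (π:ℂ)) ^ (-s) * Complex.Gamma s * sinZeta a s) *
        (fun s : ℂ => Complex.sin (π * s / 2))) := by
    have : ∀ᶠ s : ℂ in nhds 2, 0 < s.re :=
      (isOpen_lt continuous_const Complex.continuous_re).mem_nhds (by simp)
    filter_upwards [this] with s hs
    rw [hurwitzZetaOdd_one_sub a (s := s)]
    · simp only [Pi.mul_apply]; ring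
    · intro n h
      rw [h] at hs
      simp at hs
      have : (0:ℝ) ≤ n := Nat.cast_nonneg n
      linarith
  have h3 := h1.unique (h2.congr_of_eventuallyEq heq)
  have hg2 : Complex.Gamma 2 = 1 := by
    have := Complex.Gamma_nat_eq_factorial 1
    rw [← one_add_one_eq_two]; simpa using this
  have hp : (2 * (π:ℂ)) ^ (-2 : ℂ) = ((2 * (π:ℂ)) ^ 2)⁻¹ := by
    rw [Complex.cpow_neg]; norm_cast
  have hs0 : Complex.sin (π * 2 / 2) = 0 := by simp
  simp only [hs0, hg2, hp] at h3
  suffices hh : sinZeta a 2 / (4 * π) = deriv (hurwitzZetaOdd a) (-1) by rw [hh]; exact hd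
  rw [← neg_inj, ← mul_neg_one (deriv _ _), h3]
  field_simp
  ring

lemma sinZeta_two_aux (z : ℝ) : sinZeta z 2 = (clausen2 (2 * π * z) : ℂ) := by
  have h := hasSum_nat_sinZeta z (s := 2) (by simp)
  rw [← hasSum_nat_add_iff' 1] at h
  rw [clausen2, Complex.ofReal_tsum, ← sub_zero (sinZeta _ _)]
  have := h.tsum_eq
  simp at this
  rw [sub_zero, ← this]
  refine tsum_congr fun k => ?_
  push_cast
  congr 2
  ring

/-- Reflexion formula for the Barnes G-function, 0 < z < 1. -/
theorem logBarnesG_reflection (z : ℝ) (hz0 : 0 < z) (hz1 : z < 1) :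
    logBarnesG (1 + z) - logBarnesG (1 - z) =
      ((-z * Real.log (Real.sin (π * z) / π) - clausen2 (2 * π * z) / (2 * π) : ℝ) : ℂ) := by
  have hH : ∀ a : ℝ, 0 < a → a < 1 →
      (fun s => hurwitzZetaReal s a) = hurwitzZeta (a : UnitAddCircle) := by
    intro a h0 h1
    have : ⌈a⌉₊ = 1 := by
      rw [Nat.ceil_eq_iff one_ne_zero]; simpa using ⟨h0, h1.le⟩
    funext s
    simp [hurwitzZetaReal, this]
  have hneg : ((1 - z : ℝ) : UnitAddCircle) = -(z : UnitAddCircle) := by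
    rw [AddCircle.coe_sub, AddCircle.coe_period, zero_sub]
  have hodd := odd_deriv_aux (z : UnitAddCircle)
  have heven := (differentiableAt_hurwitzZetaEven (z : UnitAddCircle) (s := -1)
    (by norm_num)).hasDerivAt
  have d1 : hurwitzZetaDerivNegOne z = deriv (hurwitzZetaEven (z : UnitAddCircle)) (-1)
      + sinZeta z 2 / (4 * π) := by
    rw [hurwitzZetaDerivNegOne, hH z hz0 hz1]
    exact (heven.add hodd).deriv
  have d2 : hurwitzZetaDerivNegOne (1 - z) = deriv (hurwitzZetaEven (z : UnitAddCircle)) (-1)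
      - sinZeta z 2 / (4 * π) := by
    rw [hurwitzZetaDerivNegOne, hH (1 - z) (by linarith) (by linarith), hneg]
    have : hurwitzZeta (-(z : UnitAddCircle)) =
      hurwitzZetaEven (z : UnitAddCircle) - hurwitzZetaOdd (z : UnitAddCircle) := by
      funext s
      simp [hurwitzZeta, hurwitzZetaEven_neg, hurwitzZetaOdd_neg, sub_eq_add_neg]
    rw [this]
    exact (heven.sub hodd).deriv
  have hsin : 0 < Real.sin (π * z) :=
    Real.sin_pos_of_pos_of_lt_pi (by positivity) (by nlinarith [Real.pi_pos])
  have hlog : Real.log (Real.Gamma z) + Real.log (Real.Gamma (1 - z)) =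
      - Real.log (Real.sin (π * z) / π) := by
    rw [← Real.log_mul (Real.Gamma_pos_of_pos hz0).ne'
      (Real.Gamma_pos_of_pos (by linarith)).ne', Real.Gamma_mul_Gamma_one_sub, ← Real.log_inv,
      inv_div]
  have hlogC : (Real.log (Real.Gamma z) : ℂ) + Real.log (Real.Gamma (1 - z)) =
      - Real.log (Real.sin (π * z) / π) := by exact_mod_cast hlog
  rw [logBarnesG, logBarnesG, if_neg (by linarith), if_pos (by linarith), add_sub_cancel_left,
    logBarnesG1p, logBarnesG1p, d1, d2, sinZeta_two_aux]
  have hpi : (π : ℂ) ≠ 0 := by exact_mod_cast Real.pi_ne_zero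
  have e : ((-z * Real.log (Real.sin (π * z) / π) - clausen2 (2 * π * z) / (2 * π) : ℝ) : ℂ)
     = z * (-(Real.log (Real.sin (π * z) / π) : ℂ)) - clausen2 (2 * π * z) / (2 * π) := by
    rw [Complex.ofReal_sub, Complex.ofReal_mul, Complex.ofReal_div (clausen2 _)]
    push_cast
    ring
  rw [e, ← hlogC, Complex.ofReal_sub, Complex.ofReal_one]
  field_simp
  ring
end
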